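/- arXiv:1802.04411 — 5 statements merged into one kernel-verified Lean document; each statement's English description precedes it below -/
import Mathlib

section
/- There exists an absolute constant c₁ > 0 such that for every β with 0 < β ≤ 2, every n ∈ ℕ, and every function g : C_n → ℝ, one has E|∇g|² ≥ c₁ · E|g|² − 2^{1/β} · |E[|g|^β · sgn(g)]|^{2/β}. -/
open Finset MeasureTheory Real

noncomputable section

/-- Expectation on the Hamming cube `{-1,1}^n`, modeled as `Fin n → Bool`
(`true ↔ 1`, `false ↔ -1`), with the uniform probability measure. -/
def cubeE {n : ℕ} (f : (Fin n → Bool) → ℝ) : ℝ :=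
  (∑ x : Fin n → Bool, f x) / 2 ^ n

/-- The Walsh monomial `x^S = ∏_{i ∈ S} x_i`. -/
def walsh {n : ℕ} (S : Finset (Fin n)) (x : Fin n → Bool) : ℝ :=
  ∏ i ∈ S, (if x i then (1 : ℝ) else -1)

/-- Fourier coefficient `f̂(S) = E (f · x^S)`. -/
def cubeFourier {n : ℕ} (f : (Fin n → Bool) → ℝ) (S : Finset (Fin n)) : ℝ :=
  cubeE fun x => f x * walsh S x

/-- The heat semigroup `e^{tΔ} f = Σ_S e^{-t|S|} f̂(S) x^S`. -/
def heat1 {n : ℕ} (t : ℝ) (f : (Fin n → Bool) → ℝ) : (Fin n → Bool) → ℝ :=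
  fun x => ∑ S : Finset (Fin n), Real.exp (-t * (S.card : ℝ)) * cubeFourier f S * walsh S x

/-- The fractional heat semigroup `e^{tΔ_γ} f = Σ_S e^{-t|S|^γ} f̂(S) x^S`. -/
def heatFrac {n : ℕ} (γ t : ℝ) (f : (Fin n → Bool) → ℝ) : (Fin n → Bool) → ℝ :=
  fun x => ∑ S : Finset (Fin n), Real.exp (-t * (S.card : ℝ) ^ γ) * cubeFourier f S * walsh S x

/-- The Laplacian `Δf = -Σ_S |S| f̂(S) x^S`. -/
def lap {n : ℕ} (f : (Fin n → Bool) → ℝ) : (Fin n → Bool) → ℝ :=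
  fun x => -∑ S : Finset (Fin n), (S.card : ℝ) * cubeFourier f S * walsh S x

/-- The fractional Laplacian `Δ_γ f = -Σ_S |S|^γ f̂(S) x^S`. -/
def fracLap {n : ℕ} (γ : ℝ) (f : (Fin n → Bool) → ℝ) : (Fin n → Bool) → ℝ :=
  fun x => -∑ S : Finset (Fin n), (S.card : ℝ) ^ γ * cubeFourier f S * walsh S x

/-- The discrete partial derivative `∇_j f`. -/
def cubeGrad {n : ℕ} (j : Fin n) (f : (Fin n → Bool) → ℝ) (x : Fin n → Bool) : ℝ :=
  (f (Function.update x j true) - f (Function.update x j false)) / 2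

/-- The squared length of the discrete gradient, `|∇f|²(x) = Σ_j |∇_j f(x)|²`. -/
def gradSq {n : ℕ} (f : (Fin n → Bool) → ℝ) (x : Fin n → Bool) : ℝ :=
  ∑ j : Fin n, (cubeGrad j f x) ^ 2

/-- The `L^p` norm `‖f‖_p = (E|f|^p)^{1/p}` on the Hamming cube. -/
def pNorm {n : ℕ} (p : ℝ) (f : (Fin n → Bool) → ℝ) : ℝ :=
  (cubeE fun x => |f x| ^ p) ^ (1 / p)


lemma cubeE_succ {n : ℕ} (f : (Fin (n+1) → Bool) → ℝ) :
    cubeE f = (cubeE (fun x => f (Fin.cons true x)) + cubeE (fun x => f (Fin.cons false x))) / 2 := by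
  unfold cubeE
  rw [← (Fin.consEquiv (fun _ : Fin (n+1) => Bool)).sum_comp, Fintype.sum_prod_type]
  simp only [Fintype.sum_bool]
  rw [pow_succ]
  field_simp
  rfl

lemma cubeE_add {n : ℕ} (f h : (Fin n → Bool) → ℝ) :
    cubeE (fun x => f x + h x) = cubeE f + cubeE h := by
  unfold cubeE
  rw [Finset.sum_add_distrib, add_div]

lemma cubeE_mul {n : ℕ} (a : ℝ) (f : (Fin n → Bool) → ℝ) :
    cubeE (fun x => a * f x) = a * cubeE f := by
  unfold cubeE
  rw [← Finset.mul_sum, mul_div_assoc]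

lemma cubeE_const {n : ℕ} (a : ℝ) : cubeE (fun _ : Fin n → Bool => a) = a := by
  unfold cubeE
  simp

lemma cubeE_mono {n : ℕ} (f h : (Fin n → Bool) → ℝ) (H : ∀ x, f x ≤ h x) :
    cubeE f ≤ cubeE h := by
  unfold cubeE
  gcongr
  exact H _

lemma cubeE_quad {n : ℕ} (a b c : ℝ) (f : (Fin n → Bool) → ℝ) :
    cubeE (fun x => a * f x ^ 2 + b * f x + c) = a * cubeE (fun x => f x ^ 2) + b * cubeE f + c := by
  rw [cubeE_add (fun x => a * f x ^ 2 + b * f x) (fun _ => c),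
    cubeE_add (fun x => a * f x ^ 2) (fun x => b * f x), cubeE_mul, cubeE_mul, cubeE_const]

lemma cubeE_jensen {n : ℕ} (f : (Fin n → Bool) → ℝ) :
    cubeE f ^ 2 ≤ cubeE (fun x => f x ^ 2) := by
  have h1 := cubeE_quad 1 (-2 * cubeE f) (cubeE f ^ 2) f
  have h2 : cubeE (fun _ : Fin n → Bool => (0 : ℝ)) ≤
      cubeE (fun x => 1 * f x ^ 2 + (-2 * cubeE f) * f x + cubeE f ^ 2) :=
    cubeE_mono _ _ fun x => by nlinarith [sq_nonneg (f x - cubeE f)]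
  rw [cubeE_const] at h2
  nlinarith

lemma gradSq_cons {n : ℕ} (g : (Fin (n+1) → Bool) → ℝ) (b : Bool) (x : Fin n → Bool) :
    gradSq g (Fin.cons b x) =
      ((g (Fin.cons true x) - g (Fin.cons false x)) / 2) ^ 2 + gradSq (fun y => g (Fin.cons b y)) x := by
  unfold gradSq cubeGrad
  rw [Fin.sum_univ_succ]
  simp only [Fin.update_cons_zero, Fin.cons_update]

lemma cube_poincare : ∀ (n : ℕ) (g : (Fin n → Bool) → ℝ),
    cubeE (fun x => g x ^ 2) ≤ cubeE g ^ 2 + cubeE (gradSq g) := by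
  intro n
  induction n with
  | zero =>
    intro g
    simp [cubeE, gradSq]
  | succ n ih =>
    intro g
    have ht := ih (fun y => g (Fin.cons true y))
    have hf := ih (fun y => g (Fin.cons false y))
    rw [cubeE_succ (fun x => g x ^ 2), cubeE_succ g, cubeE_succ (gradSq g)]
    simp only [gradSq_cons]
    rw [cubeE_add (fun x => ((g (Fin.cons true x) - g (Fin.cons false x)) / 2) ^ 2)
      (fun x => gradSq (fun y => g (Fin.cons true y)) x),
      cubeE_add (fun x => ((g (Fin.cons true x) - g (Fin.cons false x)) / 2) ^ 2)
      (fun x => gradSq (fun y => g (Fin.cons false y)) x)]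
    have hj := cubeE_jensen (fun x : Fin n → Bool => (g (Fin.cons true x) - g (Fin.cons false x)) / 2)
    have hl : cubeE (fun x : Fin n → Bool => (g (Fin.cons true x) - g (Fin.cons false x)) / 2)
        = (cubeE (fun x => g (Fin.cons true x)) - cubeE (fun x => g (Fin.cons false x))) / 2 := by
      unfold cubeE
      rw [← Finset.sum_div, Finset.sum_sub_distrib]
      ring
    rw [hl] at hj
    nlinarith

lemma phi_lower (β u : ℝ) (hβ : 0 < β) (hβ2 : β ≤ 2) :
    (1/2 : ℝ) ^ β - 4 * (u - 1) ^ 2 ≤ |u| ^ β * Real.sign u := by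
  have h1 : (1/2 : ℝ) ^ β ≤ 1 := Real.rpow_le_one (by norm_num) (by norm_num) hβ.le
  rcases lt_or_ge u 0 with hu | hu
  · rw [Real.sign_of_neg hu]
    have : |u| ^ β ≤ (|u| + 1) ^ (2:ℝ) := by
      calc |u| ^ β ≤ (|u| + 1) ^ β := Real.rpow_le_rpow (abs_nonneg _) (by linarith) hβ.le
        _ ≤ _ := Real.rpow_le_rpow_of_exponent_le (by linarith [abs_nonneg u]) hβ2
    rw [abs_of_neg hu] at this ⊢
    norm_cast at this
    nlinarith
  · have hp : 0 ≤ |u| ^ β * Real.sign u := by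
      apply mul_nonneg (by positivity)
      rcases hu.eq_or_lt with h | h
      · rw [← h]; simp
      · rw [Real.sign_of_pos h]; norm_num
    rcases lt_or_ge u (1/2) with h | h
    · nlinarith
    · rw [Real.sign_of_pos (by linarith), abs_of_nonneg hu, mul_one]
      have := Real.rpow_le_rpow (by norm_num : (0:ℝ) ≤ 1/2) h hβ.le
      nlinarith [sq_nonneg (u - 1)]

lemma num_ineq (β : ℝ) (hβ : 0 < β) (hβ2 : β ≤ 2) :
    (1/10 : ℝ) ^ β ≤ (2:ℝ) ^ (1/2 : ℝ) * ((1/2 : ℝ) ^ β - 4 * (1/100)) := by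
  have h1 : (1/10 : ℝ) ^ β ≤ (1/2 : ℝ) ^ β :=
    Real.rpow_le_rpow (by norm_num) (by norm_num) hβ.le
  have h2 : (1/2 : ℝ) ^ (2:ℝ) ≤ (1/2 : ℝ) ^ β :=
    Real.rpow_le_rpow_of_exponent_ge (by norm_num) (by norm_num) hβ2
  have h3 : (1.4 : ℝ) ≤ (2:ℝ) ^ (1/2 : ℝ) := by
    rw [← Real.sqrt_eq_rpow]
    apply Real.le_sqrt_of_sq_le
    norm_num
  norm_num at h2
  nlinarith

lemma pos_case (β : ℝ) (hβ : 0 < β) (hβ2 : β ≤ 2) (n : ℕ) (g : (Fin n → Bool) → ℝ)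
    (hm : 0 < cubeE g) (hv : cubeE (fun x => g x ^ 2) ≤ 101 / 100 * cubeE g ^ 2) :
    1 / 101 * cubeE (fun x => g x ^ 2) ≤
      (2 : ℝ) ^ (1 / β) * |cubeE fun x => |g x| ^ β * Real.sign (g x)| ^ (2 / β) := by
  set m := cubeE g with hmdef
  have hpt : ∀ x, m ^ β * ((1/2 : ℝ) ^ β - 4 * (g x / m - 1) ^ 2) ≤ |g x| ^ β * Real.sign (g x) := by
    intro x
    have h := phi_lower β (g x / m) hβ hβ2
    have hs : Real.sign (g x / m) = Real.sign (g x) := by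
      rcases lt_trichotomy (g x) 0 with h | h | h
      · rw [Real.sign_of_neg h, Real.sign_of_neg (div_neg_of_neg_of_pos h hm)]
      · simp [h]
      · rw [Real.sign_of_pos h, Real.sign_of_pos (div_pos h hm)]
    have hH : 0 < m ^ β := Real.rpow_pos_of_pos hm β
    rw [hs, abs_div, abs_of_pos hm, Real.div_rpow (abs_nonneg _) hm.le] at h
    calc _ ≤ m ^ β * (|g x| ^ β / m ^ β * Real.sign (g x)) := by gcongr
      _ = _ := by field_simp
  have hE := cubeE_mono _ _ hpt
  have hq := cubeE_quad (m ^ β * (-4 / m ^ 2)) (m ^ β * (8 / m)) (m ^ β * ((1/2 : ℝ) ^ β - 4)) g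
  have hfun : (fun x => m ^ β * ((1/2 : ℝ) ^ β - 4 * (g x / m - 1) ^ 2)) =
      fun x => m ^ β * (-4 / m ^ 2) * g x ^ 2 + m ^ β * (8 / m) * g x
        + m ^ β * ((1/2 : ℝ) ^ β - 4) := by
    funext x
    field_simp
    ring
  rw [hfun, hq, ← hmdef] at hE
  set Q := cubeE (fun x => g x ^ 2)
  set P := cubeE fun x => |g x| ^ β * Real.sign (g x)
  have hH : 0 < m ^ β := Real.rpow_pos_of_pos hm β
  have hQ : Q / m ^ 2 ≤ 101 / 100 := by
    rw [div_le_iff₀ (by positivity)]; exact hv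
  have hE2 : m ^ β * ((1/2 : ℝ) ^ β - 4 * (1/100)) ≤ P := by
    refine le_trans ?_ hE
    have : m ^ β * (-4 / m ^ 2) * Q + m ^ β * (8 / m) * m + m ^ β * ((1/2 : ℝ) ^ β - 4)
      = m ^ β * ((1/2 : ℝ) ^ β - 4 * (Q / m ^ 2 - 1)) := by
      field_simp
      ring
    rw [this]
    apply mul_le_mul_of_nonneg_left _ hH.le
    linarith
  have hs : (0:ℝ) < (2:ℝ) ^ (1/2 : ℝ) := by positivity
  have h3 : (m / 10) ^ β ≤ (2:ℝ) ^ (1/2 : ℝ) * |P| := by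
    calc (m / 10) ^ β = m ^ β * (1/10 : ℝ) ^ β := by
          rw [← Real.mul_rpow hm.le (by norm_num)]; congr 1; ring
      _ ≤ m ^ β * ((2:ℝ) ^ (1/2 : ℝ) * ((1/2 : ℝ) ^ β - 4 * (1/100))) := by
          gcongr; exact num_ineq β hβ hβ2
      _ = (2:ℝ) ^ (1/2 : ℝ) * (m ^ β * ((1/2 : ℝ) ^ β - 4 * (1/100))) := by ring
      _ ≤ _ := by
          gcongr; exact hE2.trans (le_abs_self P)
  have h4 := Real.rpow_le_rpow (by positivity) h3 (by positivity : 0 ≤ 2 / β)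
  rw [Real.mul_rpow hs.le (abs_nonneg _), ← Real.rpow_mul (by positivity),
    ← Real.rpow_mul (by positivity), show β * (2 / β) = (2:ℝ) by field_simp,
    show (1/2 : ℝ) * (2 / β) = 1 / β by field_simp] at h4
  norm_cast at h4
  refine le_trans ?_ h4
  nlinarith

/-- Poincaré-type inequality on the Hamming cube: there is an absolute constant
`c₁ > 0` such that for every `0 < β ≤ 2`, every `n`, and every `g : C_n → ℝ`,
`E|∇g|² ≥ c₁ E|g|² - 2^{1/β} |E[|g|^β sgn g]|^{2/β}`. -/
theorem stmt1 :
    ∃ c₁ : ℝ, 0 < c₁ ∧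
      ∀ β : ℝ, 0 < β → β ≤ 2 →
        ∀ (n : ℕ) (g : (Fin n → Bool) → ℝ),
          cubeE (gradSq g) ≥
            c₁ * cubeE (fun x => (g x) ^ 2) -
              (2 : ℝ) ^ (1 / β) * |cubeE fun x => |g x| ^ β * Real.sign (g x)| ^ (2 / β) := by
  refine ⟨1 / 101, by norm_num, ?_⟩
  intro β hβ hβ2 n g
  have hR : 0 ≤ (2 : ℝ) ^ (1 / β) * |cubeE fun x => |g x| ^ β * Real.sign (g x)| ^ (2 / β) := by
    positivity
  by_contra hcon
  push Not at hcon
  have hP := cube_poincare n g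
  have hv : cubeE (fun x => g x ^ 2) ≤ 101 / 100 * cubeE g ^ 2 := by linarith
  have hD : 0 ≤ cubeE (gradSq g) := by
    have := cubeE_mono (fun _ => 0) (gradSq g) (fun x => by unfold gradSq; positivity)
    rwa [cubeE_const] at this
  rcases lt_trichotomy (cubeE g) 0 with h | h | h
  · have hneg : cubeE (fun x => - g x) = - cubeE g := by
      simp [cubeE, neg_div]
    have hp := pos_case β hβ hβ2 n (fun x => - g x) (by rw [hneg]; linarith)
      (by rw [hneg]; simpa using hv)
    have hneg2 : cubeE (fun x => |-g x| ^ β * Real.sign (-g x))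
        = - cubeE (fun x => |g x| ^ β * Real.sign (g x)) := by
      simp [cubeE, neg_div, Real.sign_neg]
    rw [hneg2, abs_neg] at hp
    simp only [neg_sq] at hp
    linarith
  · rw [h] at hv
    linarith
  · have hp := pos_case β hβ hβ2 n g h hv
    linarith
end
end

section
/- Let p > 1 and let p′ = p/(p−1) be its conjugate exponent. Then for all real numbers a and b, (a − b)·(|a|^{p−1} sgn(a) − |b|^{p−1} sgn(b)) ≥ 2·min(1/p, 1/p′)·(|a|^{p/2} sgn(a) − |b|^{p/2} sgn(b))². -/
open Real

theorem auxK (x y s : ℝ) (hx : 0 < x) (hy : 0 < y) (h0 : 0 ≤ s) (h1 : s ≤ 1) :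
    x ^ s * y ^ (2 - s) + x ^ (2 - s) * y ^ s ≤ (1 - s) * (x ^ 2 + y ^ 2) + 2 * s * (x * y) := by
  have e1 : y ^ (2 - s) = y * y ^ (1 - s) := by
    rw [show (2 - s) = 1 + (1 - s) by ring, rpow_add hy, rpow_one]
  have e2 : x ^ (2 - s) = x * x ^ (1 - s) := by
    rw [show (2 - s) = 1 + (1 - s) by ring, rpow_add hx, rpow_one]
  have g1 := Real.geom_mean_le_arith_mean2_weighted h0 (sub_nonneg.2 h1) hx.le hy.le (by ring)
  have g2 := Real.geom_mean_le_arith_mean2_weighted h0 (sub_nonneg.2 h1) hy.le hx.le (by ring)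
  rw [e1, e2]
  have k1 := mul_le_mul_of_nonneg_left g1 hy.le
  have k2 := mul_le_mul_of_nonneg_left g2 hx.le
  nlinarith

theorem auxP (p a b : ℝ) (hp : 1 < p) (ha : 0 < a) (hb : 0 < b) :
    a * b ^ (p - 1) + a ^ (p - 1) * b ≤
      (1 - 2 * min (1 / p) (1 / (p / (p - 1)))) * ((a ^ (p / 2)) ^ 2 + (b ^ (p / 2)) ^ 2)
      + 2 * (2 * min (1 / p) (1 / (p / (p - 1)))) * (a ^ (p / 2) * b ^ (p / 2)) := by
  have hp0 : 0 < p := by linarith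
  have q : 1 / (p / (p - 1)) = 1 - 1 / p := by
    have : p - 1 ≠ 0 := by linarith
    field_simp
  have hq : 1 / p < 1 := by rw [div_lt_one hp0]; exact hp
  have hq0 : 0 < 1 / p := by positivity
  have E1 : ∀ t : ℝ, 0 < t → (t ^ (p / 2)) ^ (2 * (1 / p)) = t := by
    intro t ht
    rw [← rpow_mul ht.le, show p / 2 * (2 * (1 / p)) = 1 by field_simp, rpow_one]
  have E2 : ∀ t : ℝ, 0 < t → (t ^ (p / 2)) ^ (2 - 2 * (1 / p)) = t ^ (p - 1) := by
    intro t ht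
    rw [← rpow_mul ht.le, show p / 2 * (2 - 2 * (1 / p)) = p - 1 by field_simp]
  have hA := rpow_pos_of_pos ha (p / 2)
  have hB := rpow_pos_of_pos hb (p / 2)
  rw [q]
  rcases le_total (1 / p) (1 - 1 / p) with h | h
  · rw [min_eq_left h]
    have := auxK _ _ (2 * (1 / p)) hA hB (by linarith) (by linarith)
    rw [E1 a ha, E1 b hb, E2 a ha, E2 b hb] at this
    exact this
  · rw [min_eq_right h]
    have := auxK _ _ (2 * (1 - 1 / p)) hA hB (by linarith) (by linarith)
    rw [show 2 - 2 * (1 - 1 / p) = 2 * (1 / p) by ring,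
      show 2 * (1 - 1 / p) = 2 - 2 * (1 / p) by ring,
      E1 a ha, E1 b hb, E2 a ha, E2 b hb] at this
    rw [show 2 * (1 - 1 / p) = 2 - 2 * (1 / p) by ring]
    linarith

theorem auxS (p a : ℝ) (ha : 0 < a) : a * a ^ (p - 1) = (a ^ (p / 2)) ^ 2 := by
  rw [← rpow_natCast, ← rpow_mul ha.le]
  nth_rewrite 1 [← rpow_one a]
  rw [← rpow_add ha]
  congr 1
  push_cast
  ring

theorem auxC (p : ℝ) (hp : 1 < p) : 0 ≤ 2 * min (1 / p) (1 / (p / (p - 1))) ∧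
    2 * min (1 / p) (1 / (p / (p - 1))) ≤ 1 := by
  have hp0 : 0 < p := by linarith
  have hp1 : 0 < p - 1 := by linarith
  have q : 1 / (p / (p - 1)) = 1 - 1 / p := by
    field_simp
  constructor
  · have : 0 ≤ min (1 / p) (1 / (p / (p - 1))) := le_min (by positivity) (by positivity)
    linarith
  · have h1 := min_le_left (1 / p) (1 / (p / (p - 1)))
    have h2 := min_le_right (1 / p) (1 / (p / (p - 1)))
    linarith

theorem auxSame (p a b : ℝ) (hp : 1 < p) (ha : 0 < a) (hb : 0 < b) :
    2 * min (1 / p) (1 / (p / (p - 1))) * (a ^ (p / 2) - b ^ (p / 2)) ^ 2 ≤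
      (a - b) * (a ^ (p - 1) - b ^ (p - 1)) := by
  have h := auxP p a b hp ha hb
  have h1 := auxS p a ha
  have h2 := auxS p b hb
  nlinarith

theorem auxOpp (p a b : ℝ) (hp : 1 < p) (ha : 0 < a) (hb : 0 < b) :
    2 * min (1 / p) (1 / (p / (p - 1))) * (a ^ (p / 2) + b ^ (p / 2)) ^ 2 ≤
      (a + b) * (a ^ (p - 1) + b ^ (p - 1)) := by
  have h1 := auxS p a ha
  have h2 := auxS p b hb
  obtain ⟨_, hc⟩ := auxC p hp
  have hA := rpow_pos_of_pos ha (p / 2)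
  have hB := rpow_pos_of_pos hb (p / 2)
  have hA' := rpow_pos_of_pos ha (p - 1)
  have hB' := rpow_pos_of_pos hb (p - 1)
  have k : 2 * (a ^ (p / 2) * b ^ (p / 2)) ≤ a * b ^ (p - 1) + a ^ (p - 1) * b := by
    apply le_of_sq_le_sq _ (by positivity)
    have : (2 * (a ^ (p / 2) * b ^ (p / 2))) ^ 2
        = 4 * ((a * b ^ (p - 1)) * (a ^ (p - 1) * b)) := by
      rw [mul_pow, mul_pow, ← h1, ← h2]; ring
    rw [this]
    nlinarith [sq_nonneg (a * b ^ (p - 1) - a ^ (p - 1) * b)]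
  have := mul_le_mul_of_nonneg_right hc (sq_nonneg (a ^ (p / 2) + b ^ (p / 2)))
  nlinarith

theorem auxZ (p a : ℝ) (hp : 1 < p) (ha : 0 < a) :
    2 * min (1 / p) (1 / (p / (p - 1))) * (a ^ (p / 2)) ^ 2 ≤ a * a ^ (p - 1) := by
  rw [auxS p a ha]
  have := mul_le_mul_of_nonneg_right (auxC p hp).2 (sq_nonneg (a ^ (p / 2)))
  linarith

/-- Elementary two-point inequality: for `p > 1` with conjugate exponent
`p' = p/(p-1)`, and all reals `a, b`,
`(a-b)(|a|^{p-1} sgn a - |b|^{p-1} sgn b) ≥ 2 min(1/p, 1/p') (|a|^{p/2} sgn a - |b|^{p/2} sgn b)²`. -/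
theorem stmt2 (p : ℝ) (hp : 1 < p) (a b : ℝ) :
    (a - b) * (|a| ^ (p - 1) * Real.sign a - |b| ^ (p - 1) * Real.sign b) ≥
      2 * min (1 / p) (1 / (p / (p - 1))) *
        (|a| ^ (p / 2) * Real.sign a - |b| ^ (p / 2) * Real.sign b) ^ 2 := by
  rw [ge_iff_le]
  rcases lt_trichotomy a 0 with ha | ha | ha <;> rcases lt_trichotomy b 0 with hb | hb | hb
  · rw [abs_of_neg ha, abs_of_neg hb, sign_of_neg ha, sign_of_neg hb]
    have := auxSame p (-a) (-b) hp (by linarith) (by linarith)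
    linarith
  · rw [hb, abs_of_neg ha, sign_of_neg ha, sign_zero]
    have := auxZ p (-a) hp (by linarith)
    linarith
  · rw [abs_of_neg ha, abs_of_pos hb, sign_of_neg ha, sign_of_pos hb]
    have := auxOpp p (-a) b hp (by linarith) (by linarith)
    linarith
  · rw [ha, abs_of_neg hb, sign_of_neg hb, sign_zero]
    have := auxZ p (-b) hp (by linarith)
    linarith
  · simp [ha, hb]
  · rw [ha, abs_of_pos hb, sign_of_pos hb, sign_zero]
    have := auxZ p b hp hb
    linarith
  · rw [abs_of_pos ha, abs_of_neg hb, sign_of_pos ha, sign_of_neg hb]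
    have := auxOpp p a (-b) hp (by linarith) (by linarith)
    linarith
  · rw [hb, abs_of_pos ha, sign_of_pos ha, sign_zero]
    have := auxZ p a hp ha
    linarith
  · rw [abs_of_pos ha, abs_of_pos hb, sign_of_pos ha, sign_of_pos hb]
    have := auxSame p a b hp ha hb
    linarith
end

section
/- Let 1 < p < ∞ with conjugate exponent p′ = p/(p−1). For every n ∈ ℕ and every f : C_n → ℝ, one has −E(Δf · |f|^{p−1} sgn(f)) ≥ 2·min(1/p, 1/p′) · E|∇(|f|^{p/2} sgn(f))|². -/
open Finset MeasureTheory Real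

noncomputable section

lemma s3_K {s u v : ℝ} (hs : 0 < s) (hs1 : s ≤ 1) (hu : 0 ≤ u) (hv : 0 ≤ v) :
    u ^ s * v ^ (2 - s) ≤ (1 - s) * v ^ 2 + s * (u * v) := by
  have h := Real.geom_mean_le_arith_mean2_weighted (sub_nonneg.2 hs1) hs.le (sq_nonneg v)
    (mul_nonneg hu hv) (by ring)
  have e : (v ^ 2) ^ (1 - s) * (u * v) ^ s = u ^ s * v ^ (2 - s) := by
    rw [Real.mul_rpow hu hv, ← Real.rpow_natCast v 2, ← Real.rpow_mul hv,
      show (2 - s : ℝ) = ((2 : ℕ) : ℝ) * (1 - s) + s by push_cast; ring,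
      Real.rpow_add_of_nonneg hv (by push_cast; nlinarith) hs.le]
    ring
  linarith

lemma s3_pow {s u : ℝ} (hs : 0 < s) (hs1 : s ≤ 1) (hu : 0 ≤ u) : u ^ s * u ^ (2 - s) = u ^ 2 := by
  rw [← Real.rpow_add_of_nonneg hu hs.le (by linarith), ← Real.rpow_natCast u 2]
  congr 1; push_cast; ring

lemma s3_D {s u v : ℝ} (hs : 0 < s) (hs1 : s ≤ 1) (hu : 0 ≤ u) (hv : 0 ≤ v) :
    s * (u - v) ^ 2 ≤ (u ^ s - v ^ s) * (u ^ (2 - s) - v ^ (2 - s)) := by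
  have h1 := s3_K hs hs1 hu hv
  have h2 := s3_K hs hs1 hv hu
  have h3 := s3_pow hs hs1 hu
  have h4 := s3_pow hs hs1 hv
  nlinarith

lemma s3_S {s u v : ℝ} (hs : 0 < s) (hs1 : s ≤ 1) (hu : 0 ≤ u) (hv : 0 ≤ v) :
    s * (u + v) ^ 2 ≤ (u ^ s + v ^ s) * (u ^ (2 - s) + v ^ (2 - s)) := by
  have h3 := s3_pow hs hs1 hu
  have h4 := s3_pow hs hs1 hv
  have k : 0 ≤ 2 - s := by linarith
  have hU := Real.rpow_nonneg hu s
  have hV := Real.rpow_nonneg hv s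
  have hU' := Real.rpow_nonneg hu (2 - s)
  have hV' := Real.rpow_nonneg hv (2 - s)
  have h5 : 2 * (u * v) ≤ u ^ s * v ^ (2 - s) + v ^ s * u ^ (2 - s) := by
    have e : (u ^ s * v ^ (2 - s)) * (v ^ s * u ^ (2 - s)) = (u * v) ^ 2 := by
      rw [mul_pow, ← h3, ← h4]; ring
    have hp := mul_nonneg hU hV'
    have hq := mul_nonneg hV hU'
    refine abs_le_of_sq_le_sq' ?_ (by linarith) |>.2
    nlinarith [sq_nonneg (u ^ s * v ^ (2 - s) - v ^ s * u ^ (2 - s))]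
  have h6 : s * (u + v) ^ 2 ≤ (u + v) ^ 2 := by nlinarith [sq_nonneg (u + v)]
  nlinarith

lemma s3_min (p : ℝ) (hp : 1 < p) {u v : ℝ} (hu : 0 ≤ u) (hv : 0 ≤ v) :
    2 * min (1 / p) (1 / (p / (p - 1))) * (u ^ (p / 2) - v ^ (p / 2)) ^ 2 ≤
      (u - v) * (u ^ (p - 1) - v ^ (p - 1)) ∧
    2 * min (1 / p) (1 / (p / (p - 1))) * (u ^ (p / 2) + v ^ (p / 2)) ^ 2 ≤
      (u + v) * (u ^ (p - 1) + v ^ (p - 1)) := by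
  have p0 : 0 < p := by linarith
  have e1 : ∀ w : ℝ, 0 ≤ w → (w ^ (p / 2)) ^ (2 / p) = w := fun w hw => by
    rw [← Real.rpow_mul hw, show p / 2 * (2 / p) = 1 by field_simp, Real.rpow_one]
  have e2 : ∀ w : ℝ, 0 ≤ w → (w ^ (p / 2)) ^ (2 - 2 / p) = w ^ (p - 1) := fun w hw => by
    rw [← Real.rpow_mul hw]; congr 1; field_simp
  have U := Real.rpow_nonneg hu (p / 2)
  have V := Real.rpow_nonneg hv (p / 2)
  have e3 : 1 / (p / (p - 1)) = 1 - 1 / p := by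
    have : p - 1 ≠ 0 := by linarith
    field_simp
  have e4 : 2 / p = 2 * (1 / p) := by ring
  rw [e3]
  have q0 : 0 < 1 / p := by positivity
  have q1 : 1 / p < 1 := by rw [div_lt_one p0]; exact hp
  rcases le_total (1 / p) (1 - 1 / p) with h | h
  · rw [min_eq_left h, ← e4]
    have a1 := s3_D (s := 2 / p) (by linarith) (by linarith) U V
    have a2 := s3_S (s := 2 / p) (by linarith) (by linarith) U V
    rw [e1 u hu, e1 v hv, e2 u hu, e2 v hv] at a1 a2
    exact ⟨a1, a2⟩
  · rw [min_eq_right h, show 2 * (1 - 1 / p) = 2 - 2 / p by ring]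
    have a1 := s3_D (s := 2 - 2 / p) (by linarith) (by linarith) U V
    have a2 := s3_S (s := 2 - 2 / p) (by linarith) (by linarith) U V
    rw [sub_sub_cancel, e1 u hu, e1 v hv, e2 u hu, e2 v hv] at a1
    rw [sub_sub_cancel, e1 u hu, e1 v hv, e2 u hu, e2 v hv] at a2
    exact ⟨by linarith, by linarith⟩

lemma s3_pt (p : ℝ) (hp : 1 < p) (a b : ℝ) :
    2 * min (1 / p) (1 / (p / (p - 1))) *
      (|a| ^ (p / 2) * Real.sign a - |b| ^ (p / 2) * Real.sign b) ^ 2 ≤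
      (a - b) * (|a| ^ (p - 1) * Real.sign a - |b| ^ (p - 1) * Real.sign b) := by
  have H : ∀ w q : ℝ, 0 < q → 0 ≤ w → |w| ^ q * Real.sign w = w ^ q := by
    intro w q hq hw
    rcases hw.eq_or_lt with rfl | h
    · simp [Real.zero_rpow hq.ne']
    · rw [Real.sign_of_pos h, abs_of_pos h, mul_one]
  have N : ∀ w q : ℝ, 0 < q → w ≤ 0 → |w| ^ q * Real.sign w = - (-w) ^ q := by
    intro w q hq hw
    rw [← H (-w) q hq (by linarith), abs_neg, Real.sign_neg]; ring
  have q1 : 0 < p / 2 := by linarith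
  have q2 : 0 < p - 1 := by linarith
  rcases le_total 0 a with ha | ha <;> rcases le_total 0 b with hb | hb
  · rw [H a _ q1 ha, H b _ q1 hb, H a _ q2 ha, H b _ q2 hb]
    exact (s3_min p hp ha hb).1
  · rw [H a _ q1 ha, N b _ q1 hb, H a _ q2 ha, N b _ q2 hb]
    have := (s3_min p hp ha (neg_nonneg.2 hb)).2
    convert this using 1 <;> ring
  · rw [N a _ q1 ha, H b _ q1 hb, N a _ q2 ha, H b _ q2 hb]
    have := (s3_min p hp (neg_nonneg.2 ha) hb).2
    convert this using 1 <;> ring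
  · rw [N a _ q1 ha, N b _ q1 hb, N a _ q2 ha, N b _ q2 hb]
    have := (s3_min p hp (neg_nonneg.2 ha) (neg_nonneg.2 hb)).1
    convert this using 1 <;> ring

def s3flip {n : ℕ} (j : Fin n) (x : Fin n → Bool) : Fin n → Bool :=
  Function.update x j (!x j)

lemma s3flip_flip {n : ℕ} (j : Fin n) : Function.Involutive (s3flip j) := by
  intro x; simp [s3flip]

lemma s3_walsh_flip {n : ℕ} (S : Finset (Fin n)) (j : Fin n) (x : Fin n → Bool) :
    walsh S (s3flip j x) = if j ∈ S then - walsh S x else walsh S x := by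
  unfold walsh
  split_ifs with h
  · rw [← Finset.mul_prod_erase _ _ h, ← Finset.mul_prod_erase _ _ h, ← neg_mul]
    congr 1
    · cases hx : x j <;> simp [s3flip, hx]
    · apply Finset.prod_congr rfl
      intro i hi
      simp [s3flip, Function.update_of_ne (Finset.ne_of_mem_erase hi)]
  · apply Finset.prod_congr rfl
    intro i hi
    have : i ≠ j := fun e => h (e ▸ hi)
    simp [s3flip, Function.update_of_ne this]

lemma s3_orth {n : ℕ} (x y : Fin n → Bool) :
    ∑ S : Finset (Fin n), walsh S y * walsh S x = if y = x then 2 ^ n else 0 := by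
  have : ∑ S : Finset (Fin n), walsh S y * walsh S x =
      ∏ i : Fin n, (1 + (if y i then (1 : ℝ) else -1) * (if x i then (1 : ℝ) else -1)) := by
    rw [Finset.prod_one_add, Finset.powerset_univ]
    simp only [walsh, Finset.prod_mul_distrib]
  rw [this]
  split_ifs with h
  · subst h
    rw [Finset.prod_congr rfl (g := fun _ => (2 : ℝ))]
    · simp
    · intro i _
      split_ifs <;> norm_num
  · obtain ⟨i, hi⟩ := Function.ne_iff.1 h
    apply Finset.prod_eq_zero (Finset.mem_univ i)
    cases hy : y i <;> cases hx : x i <;> simp_all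

lemma s3_inv {n : ℕ} (f : (Fin n → Bool) → ℝ) (x : Fin n → Bool) :
    f x = ∑ S : Finset (Fin n), cubeFourier f S * walsh S x := by
  have : ∑ S : Finset (Fin n), cubeFourier f S * walsh S x =
      (∑ y, f y * ∑ S : Finset (Fin n), walsh S y * walsh S x) / 2 ^ n := by
    simp only [cubeFourier, cubeE, Finset.mul_sum, Finset.sum_div, Finset.sum_mul]
    rw [Finset.sum_comm]
    refine Finset.sum_congr rfl fun _ _ => Finset.sum_congr rfl fun _ _ => by ring
  rw [this]
  simp [s3_orth]

lemma s3_lap {n : ℕ} (f : (Fin n → Bool) → ℝ) (x : Fin n → Bool) :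
    lap f x = - ∑ j : Fin n, (f x - f (s3flip j x)) / 2 := by
  unfold lap
  congr 1
  have : ∀ j : Fin n, (f x - f (s3flip j x)) / 2 =
      ∑ S : Finset (Fin n), if j ∈ S then cubeFourier f S * walsh S x else 0 := by
    intro j
    conv_lhs => rw [s3_inv f x, s3_inv f (s3flip j x)]
    rw [← Finset.sum_sub_distrib, Finset.sum_div]
    refine Finset.sum_congr rfl fun S _ => ?_
    rw [s3_walsh_flip]
    split_ifs <;> ring
  simp only [this]
  rw [Finset.sum_comm]
  refine Finset.sum_congr rfl fun S _ => ?_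
  rw [Finset.sum_ite_mem, Finset.univ_inter, Finset.sum_const, nsmul_eq_mul]
  ring

lemma s3_symm {n : ℕ} (f g : (Fin n → Bool) → ℝ) (j : Fin n) :
    ∑ x, (f x - f (s3flip j x)) / 2 * g x =
      ∑ x, (f x - f (s3flip j x)) * (g x - g (s3flip j x)) / 4 := by
  have h := Equiv.sum_comp (s3flip_flip j).toPerm (fun x => (f x - f (s3flip j x)) / 2 * g x)
  simp only [Function.Involutive.coe_toPerm, s3flip_flip j _] at h
  have : ∑ x, (f x - f (s3flip j x)) * (g x - g (s3flip j x)) / 4 =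
      (∑ x, (f x - f (s3flip j x)) / 2 * g x +
        ∑ x, (f (s3flip j x) - f x) / 2 * g (s3flip j x)) / 2 := by
    rw [← Finset.sum_add_distrib, Finset.sum_div]
    refine Finset.sum_congr rfl fun _ _ => by ring
  rw [this, h]; ring

lemma s3_grad {n : ℕ} (g : (Fin n → Bool) → ℝ) (j : Fin n) (x : Fin n → Bool) :
    cubeGrad j g x ^ 2 = (g x - g (s3flip j x)) ^ 2 / 4 := by
  have e := Function.update_eq_self j x
  unfold cubeGrad s3flip
  cases hx : x j <;> rw [hx] at e <;> simp only [Bool.not_true, Bool.not_false, e] <;> ring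

/-- For `1 < p < ∞` with conjugate exponent `p' = p/(p-1)`, every `n` and every
`f : C_n → ℝ`:
`-E(Δf · |f|^{p-1} sgn f) ≥ 2 min(1/p, 1/p') · E|∇(|f|^{p/2} sgn f)|²`. -/
theorem stmt3 (p : ℝ) (hp : 1 < p) (n : ℕ) (f : (Fin n → Bool) → ℝ) :
    -cubeE (fun x => lap f x * (|f x| ^ (p - 1) * Real.sign (f x))) ≥
      2 * min (1 / p) (1 / (p / (p - 1))) *
        cubeE (gradSq fun x => |f x| ^ (p / 2) * Real.sign (f x)) := by
  have key : -cubeE (fun x => lap f x * (|f x| ^ (p - 1) * Real.sign (f x))) =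
      (∑ j : Fin n, ∑ x, (f x - f (s3flip j x)) * ((|f x| ^ (p - 1) * Real.sign (f x)) -
        (|f (s3flip j x)| ^ (p - 1) * Real.sign (f (s3flip j x)))) / 4) / 2 ^ n := by
    unfold cubeE
    rw [← neg_div, ← Finset.sum_neg_distrib]
    congr 1
    rw [← Finset.sum_congr rfl fun j _ =>
      s3_symm f (fun x => |f x| ^ (p - 1) * Real.sign (f x)) j, Finset.sum_comm]
    refine Finset.sum_congr rfl fun x _ => ?_
    rw [s3_lap, neg_mul, neg_neg, Finset.sum_mul]
  rw [key, ge_iff_le]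
  unfold cubeE gradSq
  rw [Finset.sum_comm, ← mul_div_assoc]
  apply div_le_div_of_nonneg_right _ (by positivity)
  rw [Finset.mul_sum]
  refine Finset.sum_le_sum fun j _ => ?_
  rw [Finset.mul_sum]
  refine Finset.sum_le_sum fun x _ => ?_
  rw [s3_grad]
  have := s3_pt p hp (f x) (f (s3flip j x))
  linarith
end
end

section
/- There exists an absolute constant C₁ > 0 such that for every 0 < γ ≤ 1, every 1 < p < ∞, every n ∈ ℕ, every f : C_n → ℝ, and every t > 0, one has ‖e^{tΔ_γ}(f − E f)‖_p ≤ e^{−k_γ t} ‖f − E f‖_p, where k_γ = (C₁ · c_p)^γ, c_p = 2·min(1/p, 1/p′), and p′ = p/(p−1). -/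
open Finset MeasureTheory Real

noncomputable section

namespace Cube

def sgn (b : Bool) : ℝ := if b then 1 else -1

lemma walsh_eq {n : ℕ} (S : Finset (Fin n)) (x : Fin n → Bool) :
    walsh S x = ∏ i, (if i ∈ S then sgn (x i) else 1) := by
  unfold walsh
  rw [← Finset.prod_filter]
  simp [sgn]

lemma sum_walsh_mul {n : ℕ} (x y : Fin n → Bool) :
    ∑ S : Finset (Fin n), walsh S x * walsh S y = if x = y then (2:ℝ) ^ n else 0 := by
  have h1 : ∀ S : Finset (Fin n), walsh S x * walsh S y = ∏ i ∈ S, (sgn (x i) * sgn (y i)) := by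
    intro S
    unfold walsh
    rw [← Finset.prod_mul_distrib]
    simp [sgn]
  simp_rw [h1]
  rw [← Finset.powerset_univ, ← Finset.prod_one_add]
  split_ifs with h
  · subst h
    have : ∀ i ∈ (univ : Finset (Fin n)), 1 + sgn (x i) * sgn (x i) = 2 := by
      intro i _
      unfold sgn
      split_ifs <;> norm_num
    rw [Finset.prod_congr rfl this]
    simp
  · have : ∃ i, x i ≠ y i := by
      by_contra hc
      push Not at hc
      exact h (funext hc)
    obtain ⟨i, hi⟩ := this
    apply Finset.prod_eq_zero (Finset.mem_univ i)
    unfold sgn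
    cases hx : x i <;> cases hy : y i <;> simp_all

lemma cubeE_walsh_mul {n : ℕ} (S T : Finset (Fin n)) :
    cubeE (fun x => walsh S x * walsh T x) = if S = T then (1:ℝ) else 0 := by
  unfold cubeE
  have h1 : ∀ x : Fin n → Bool, walsh S x * walsh T x =
      ∏ i, ((if i ∈ S then sgn (x i) else 1) * (if i ∈ T then sgn (x i) else 1)) := by
    intro x
    rw [walsh_eq, walsh_eq, ← Finset.prod_mul_distrib]
  simp_rw [h1]
  rw [← Fintype.prod_sum (fun i (b : Bool) =>
    ((if i ∈ S then sgn b else 1) * (if i ∈ T then sgn b else 1)))]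
  split_ifs with h
  · subst h
    have : ∀ i ∈ (univ : Finset (Fin n)), ∑ b : Bool,
      ((if i ∈ S then sgn b else 1) * (if i ∈ S then sgn b else 1)) = 2 := by
      intro i _
      simp [sgn]
      split_ifs <;> norm_num
    rw [Finset.prod_congr rfl this]
    simp
  · have : ∃ i, ¬ (i ∈ S ↔ i ∈ T) := by
      by_contra hc
      push Not at hc
      exact h (Finset.ext hc)
    obtain ⟨i, hi⟩ := this
    rw [Finset.prod_eq_zero (Finset.mem_univ i), zero_div]
    by_cases hS : i ∈ S <;> by_cases hT : i ∈ T <;> simp_all [sgn]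

lemma inversion {n : ℕ} (f : (Fin n → Bool) → ℝ) (x : Fin n → Bool) :
    ∑ S, cubeFourier f S * walsh S x = f x := by
  unfold cubeFourier cubeE
  simp_rw [div_mul_eq_mul_div, Finset.sum_mul]
  rw [← Finset.sum_div, Finset.sum_comm]
  simp_rw [mul_assoc, ← Finset.mul_sum, sum_walsh_mul]
  simp

lemma cubeE_sum {n : ℕ} {ι : Type*} (s : Finset ι) (g : ι → (Fin n → Bool) → ℝ) :
    cubeE (fun x => ∑ i ∈ s, g i x) = ∑ i ∈ s, cubeE (g i) := by
  unfold cubeE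
  rw [Finset.sum_comm, Finset.sum_div]

lemma cubeE_mul_left {n : ℕ} (c : ℝ) (g : (Fin n → Bool) → ℝ) :
    cubeE (fun x => c * g x) = c * cubeE g := by
  unfold cubeE
  rw [← Finset.mul_sum, mul_div_assoc]

lemma cubeE_add {n : ℕ} (f g : (Fin n → Bool) → ℝ) :
    cubeE (fun x => f x + g x) = cubeE f + cubeE g := by
  unfold cubeE
  rw [Finset.sum_add_distrib, add_div]

lemma cubeE_sub {n : ℕ} (f g : (Fin n → Bool) → ℝ) :
    cubeE (fun x => f x - g x) = cubeE f - cubeE g := by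
  unfold cubeE
  rw [Finset.sum_sub_distrib, sub_div]

lemma cubeE_const {n : ℕ} (c : ℝ) : cubeE (fun _ : Fin n → Bool => c) = c := by
  unfold cubeE
  simp

lemma cubeE_mono {n : ℕ} {f g : (Fin n → Bool) → ℝ} (h : ∀ x, f x ≤ g x) :
    cubeE f ≤ cubeE g := by
  unfold cubeE
  gcongr
  exact h _

lemma cubeE_nonneg {n : ℕ} {f : (Fin n → Bool) → ℝ} (h : ∀ x, 0 ≤ f x) :
    0 ≤ cubeE f := by
  unfold cubeE
  have := Finset.sum_nonneg (s := univ) (fun x _ => h x)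
  positivity

/-- Fourier multiplier. -/
def mult {n : ℕ} (m : ℕ → ℝ) (f : (Fin n → Bool) → ℝ) : (Fin n → Bool) → ℝ :=
  fun x => ∑ S : Finset (Fin n), m S.card * cubeFourier f S * walsh S x

lemma fourier_mult {n : ℕ} (m : ℕ → ℝ) (f : (Fin n → Bool) → ℝ) (T : Finset (Fin n)) :
    cubeFourier (mult m f) T = m T.card * cubeFourier f T := by
  conv_lhs => unfold cubeFourier mult
  simp_rw [Finset.sum_mul, mul_assoc]
  rw [cubeE_sum]
  simp_rw [cubeE_mul_left, cubeE_walsh_mul]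
  simp

lemma cubeE_mul_mult {n : ℕ} (m : ℕ → ℝ) (f g : (Fin n → Bool) → ℝ) :
    cubeE (fun x => g x * mult m f x) =
      ∑ S : Finset (Fin n), m S.card * (cubeFourier f S * cubeFourier g S) := by
  unfold mult
  simp_rw [Finset.mul_sum]
  rw [cubeE_sum]
  refine Finset.sum_congr rfl fun S _ => ?_
  rw [← mul_assoc]
  conv_rhs => rw [cubeFourier.eq_1 g]
  rw [← cubeE_mul_left]
  congr 1
  ext x
  ring

lemma parseval {n : ℕ} (f g : (Fin n → Bool) → ℝ) :
    cubeE (fun x => g x * f x) = ∑ S, cubeFourier f S * cubeFourier g S := by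
  have := cubeE_mul_mult (fun _ => 1) f g
  simp only [one_mul] at this
  rw [← this]
  congr 1
  ext x
  rw [show mult (fun _ => 1) f x = f x by simp [mult, inversion]]

lemma fourier_empty {n : ℕ} (f : (Fin n → Bool) → ℝ) : cubeFourier f ∅ = cubeE f := by
  simp [cubeFourier, walsh]

/-- Coordinate flip. -/
def flip {n : ℕ} (j : Fin n) (x : Fin n → Bool) : Fin n → Bool :=
  Function.update x j (!(x j))

lemma flip_flip {n : ℕ} (j : Fin n) (x : Fin n → Bool) : flip j (flip j x) = x := by
  simp [flip]

lemma cubeE_flip {n : ℕ} (j : Fin n) (f : (Fin n → Bool) → ℝ) :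
    cubeE (fun x => f (flip j x)) = cubeE f := by
  unfold cubeE
  congr 1
  exact Equiv.sum_comp (⟨flip j, flip j, flip_flip j, flip_flip j⟩ : Equiv.Perm _) f

lemma walsh_flip {n : ℕ} (j : Fin n) (S : Finset (Fin n)) (x : Fin n → Bool) :
    walsh S (flip j x) = (if j ∈ S then -1 else 1) * walsh S x := by
  by_cases hj : j ∈ S
  · unfold walsh
    rw [← Finset.mul_prod_erase S _ hj, ← Finset.mul_prod_erase S _ hj, if_pos hj]
    rw [← mul_assoc]
    congr 1
    · cases h : x j <;> simp [flip, h]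
    · refine Finset.prod_congr rfl fun i hi => ?_
      rw [flip, Function.update_of_ne (Finset.ne_of_mem_erase hi)]
  · rw [if_neg hj, one_mul]
    unfold walsh
    refine Finset.prod_congr rfl fun i hi => ?_
    rw [flip, Function.update_of_ne (by rintro rfl; exact hj hi)]

lemma mult_id_eq {n : ℕ} (f : (Fin n → Bool) → ℝ) (x : Fin n → Bool) :
    mult (fun k => (k : ℝ)) f x = ∑ j, (f x - f (flip j x)) / 2 := by
  have h : ∀ j, (f x - f (flip j x)) / 2 =
      ∑ S, (if j ∈ S then 1 else 0) * (cubeFourier f S * walsh S x) := by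
    intro j
    rw [← inversion f x, ← inversion f (flip j x), ← Finset.sum_sub_distrib, Finset.sum_div]
    refine Finset.sum_congr rfl fun S _ => ?_
    rw [walsh_flip]
    split_ifs <;> ring
  simp_rw [h]
  rw [Finset.sum_comm]
  unfold mult
  refine Finset.sum_congr rfl fun S _ => ?_
  rw [← Finset.sum_mul]
  simp [mul_assoc]

lemma energy_eq {n : ℕ} (f g : (Fin n → Bool) → ℝ) :
    cubeE (fun x => g x * mult (fun k => (k : ℝ)) f x) =
      ∑ j, cubeE (fun x => (g x - g (flip j x)) * (f x - f (flip j x))) / 4 := by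
  simp_rw [mult_id_eq, Finset.mul_sum]
  rw [cubeE_sum]
  refine Finset.sum_congr rfl fun j _ => ?_
  have h := cubeE_flip j (fun x => g x * ((f x - f (flip j x)) / 2))
  simp only [flip_flip] at h
  have h2 := cubeE_add (fun x => g x * ((f x - f (flip j x)) / 2))
    (fun x => g (flip j x) * ((f (flip j x) - f x) / 2))
  have h3 : cubeE (fun x => g x * ((f x - f (flip j x)) / 2) +
      g (flip j x) * ((f (flip j x) - f x) / 2)) =
      (1/2) * cubeE (fun x => (g x - g (flip j x)) * (f x - f (flip j x))) := by
    rw [← cubeE_mul_left]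
    congr 1
    ext x
    ring
  linarith

lemma poincare {n : ℕ} (f : (Fin n → Bool) → ℝ) :
    cubeE (fun x => f x ^ 2) - cubeE f ^ 2 ≤
      cubeE (fun x => f x * mult (fun k => (k : ℝ)) f x) := by
  rw [cubeE_mul_mult]
  have h := parseval f f
  simp_rw [← pow_two] at h ⊢
  rw [h, ← fourier_empty f, sub_le_iff_le_add]
  rw [← Finset.add_sum_erase univ _ (Finset.mem_univ (∅ : Finset (Fin n))), add_comm]
  gcongr
  refine (Finset.sum_le_sum (g := fun S : Finset (Fin n) => (S.card : ℝ) * cubeFourier f S ^ 2) ?_).trans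
    (Finset.sum_le_sum_of_subset_of_nonneg (Finset.erase_subset _ _) ?_)
  · intro S hS
    have : 1 ≤ S.card := Finset.card_pos.mpr (Finset.nonempty_iff_ne_empty.mpr (Finset.ne_of_mem_erase hS))
    have : (1:ℝ) ≤ S.card := by exact_mod_cast this
    nlinarith [sq_nonneg (cubeFourier f S)]
  · intro S _ _
    positivity

/-- signed power `|y|^{p-1} sgn y` -/
def phi (p y : ℝ) : ℝ := |y| ^ (p - 2) * y

lemma phi_neg (p y : ℝ) : phi p (-y) = - phi p y := by
  simp [phi]

lemma phi_nonneg_eq {p y : ℝ} (hp : 1 < p) (hy : 0 ≤ y) : phi p y = y ^ (p - 1) := by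
  unfold phi
  rcases hy.eq_or_lt with rfl | h
  · rw [Real.zero_rpow (by linarith : p - 1 ≠ 0)]; simp
  · rw [abs_of_pos h, ← Real.rpow_add_one h.ne']
    congr 1
    ring

lemma abs_phi {p : ℝ} (hp : 1 < p) (y : ℝ) : |phi p y| = |y| ^ (p - 1) := by
  rcases le_total 0 y with h | h
  · rw [phi_nonneg_eq hp h, abs_of_nonneg h, abs_of_nonneg (by positivity)]
  · have := phi_nonneg_eq hp (neg_nonneg.mpr h)
    rw [← neg_neg y, phi_neg, abs_neg, abs_neg, this, abs_of_nonneg (neg_nonneg.mpr h),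
      abs_of_nonneg (Real.rpow_nonneg (neg_nonneg.mpr h) _)]

lemma phi_mul_self {p : ℝ} (hp : 1 < p) (y : ℝ) : phi p y * y = |y| ^ p := by
  have h : phi p y * y = |phi p y| * |y| := by
    rw [← abs_mul, abs_of_nonneg]
    unfold phi
    rw [mul_assoc]
    have := mul_self_nonneg y
    positivity
  rw [h, abs_phi hp]
  rcases (abs_nonneg y).eq_or_lt with h0 | h0
  · rw [← h0, mul_zero, Real.zero_rpow (by linarith)]
  · rw [← Real.rpow_add_one h0.ne']
    congr 1
    ring

lemma rpow_sub_le {q a b : ℝ} (hq : 1 ≤ q) (hb : 0 ≤ b) (hab : b ≤ a) :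
    a ^ q - b ^ q ≤ q * a ^ (q - 1) * (a - b) := by
  rcases (hb.trans hab).eq_or_lt with h | ha
  · have : b = a := by linarith
    subst this; simp
  · have h := one_add_mul_self_le_rpow_one_add (s := b / a - 1)
      (by have : 0 ≤ b / a := by positivity
          linarith) hq
    rw [show 1 + (b / a - 1) = b / a by ring, Real.div_rpow hb ha.le] at h
    have ha' : 0 < a ^ q := by positivity
    rw [le_div_iff₀ ha'] at h
    have : a ^ (q - 1) = a ^ q / a := Real.rpow_sub_one ha.ne' q
    rw [this]
    have e : (1 + q * (b / a - 1)) * a ^ q = a ^ q - q * (a ^ q / a) * (a - b) := by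
      field_simp
      ring
    linarith

/-- Stroock–Varopoulos, `p ≥ 2`, nonneg arguments. -/
lemma sv_pos {p a b : ℝ} (hp : 2 ≤ p) (hb : 0 ≤ b) (hab : b ≤ a) :
    (2 / p) * (a ^ (p / 2) - b ^ (p / 2)) ^ 2 ≤ (a ^ (p - 1) - b ^ (p - 1)) * (a - b) := by
  have ha := hb.trans hab
  rcases ha.eq_or_lt with h | ha
  · have : b = a := by linarith
    subst this; simp
  have h1 := rpow_sub_le (q := p / 2) (by linarith) hb hab
  have h2 : a ^ (p / 2 - 1) * (a ^ (p / 2) - b ^ (p / 2)) ≤ a ^ (p - 1) - b ^ (p - 1) := by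
    have e : a ^ (p / 2 - 1) * a ^ (p / 2) = a ^ (p - 1) := by
      rw [← Real.rpow_add ha]; congr 1; ring
    have e2 : b ^ (p - 1) ≤ a ^ (p / 2 - 1) * b ^ (p / 2) := by
      rcases hb.eq_or_lt with h | hb
      · subst h
        rw [Real.zero_rpow (by linarith), Real.zero_rpow (by linarith)]; simp
      · rw [show p - 1 = (p / 2 - 1) + p / 2 by ring, Real.rpow_add hb]
        gcongr
        linarith
    nlinarith
  have h3 : 0 ≤ a ^ (p / 2) - b ^ (p / 2) := by
    have := Real.rpow_le_rpow hb hab (by linarith : 0 ≤ p / 2)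
    linarith
  have h4 : 0 < a ^ (p / 2 - 1) := by positivity
  rw [div_mul_eq_mul_div, div_le_iff₀ (by linarith)]
  have h5 := mul_le_mul_of_nonneg_right h1 h3
  have h6 := mul_le_mul_of_nonneg_left h2 (mul_nonneg (by linarith : 0 ≤ p) (sub_nonneg.mpr hab))
  nlinarith

/-- the constant `c_p` -/
def cp (p : ℝ) : ℝ := 2 * min (1 / p) (1 / (p / (p - 1)))

lemma cp_pos {p : ℝ} (hp : 1 < p) : 0 < cp p := by
  unfold cp
  have h1 : 0 < p - 1 := by linarith
  have h2 : 0 < p := by linarith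
  have : 0 < min (1 / p) (1 / (p / (p - 1))) := by
    apply lt_min <;> positivity
  positivity

lemma cp_le_one {p : ℝ} (hp : 1 < p) : cp p ≤ 1 := by
  unfold cp
  have h1 := min_le_left (1 / p) (1 / (p / (p - 1)))
  have h2 := min_le_right (1 / p) (1 / (p / (p - 1)))
  have h3 : 1 / p + 1 / (p / (p - 1)) = 1 := by
    have : p - 1 ≠ 0 := by linarith
    field_simp
    ring
  linarith

lemma sv_pos' {p a b : ℝ} (hp : 1 < p) (hb : 0 ≤ b) (hab : b ≤ a) :
    cp p * (a ^ (p / 2) - b ^ (p / 2)) ^ 2 ≤ (a ^ (p - 1) - b ^ (p - 1)) * (a - b) := by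
  rcases le_total 2 p with h | h
  · refine le_trans ?_ (sv_pos h hb hab)
    gcongr
    unfold cp
    have h1 := min_le_left (1 / p) (1 / (p / (p - 1)))
    calc _ ≤ 2 * (1 / p) := by linarith
      _ = 2 / p := by ring
  · have hp1 : 0 < p - 1 := by linarith
    have ha := hb.trans hab
    have h2 := sv_pos (p := p / (p - 1)) (a := a ^ (p - 1)) (b := b ^ (p - 1))
      (by rw [le_div_iff₀ hp1]; linarith) (by positivity) (by gcongr)
    simp only [← Real.rpow_mul ha, ← Real.rpow_mul hb] at h2
    have e1 : (p - 1) * (p / (p - 1) / 2) = p / 2 := by field_simp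
    have e2 : (p - 1) * (p / (p - 1) - 1) = 1 := by field_simp; ring
    rw [e1, e2, Real.rpow_one, Real.rpow_one, mul_comm (a - b)] at h2
    refine le_trans ?_ h2
    gcongr
    unfold cp
    have h1 := min_le_right (1 / p) (1 / (p / (p - 1)))
    calc _ ≤ 2 * (1 / (p / (p - 1))) := by linarith
      _ = 2 / (p / (p - 1)) := by ring

lemma sv_mixed {p a b : ℝ} (hp : 1 < p) (ha : 0 ≤ a) (hb : 0 ≤ b) :
    cp p * (a ^ (p / 2) + b ^ (p / 2)) ^ 2 ≤ (a ^ (p - 1) + b ^ (p - 1)) * (a + b) := by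
  have key : ∀ c : ℝ, 0 ≤ c → (c ^ (p/2)) ^ 2 = c ^ (p - 1) * c := by
    intro c hc
    rw [← Real.rpow_natCast, ← Real.rpow_mul hc]
    rcases hc.eq_or_lt with rfl | hc
    · rw [mul_zero, Real.zero_rpow]
      push_cast
      linarith
    · rw [← Real.rpow_add_one hc.ne']
      congr 1
      push_cast
      ring
  have h1 : (a ^ (p / 2) + b ^ (p / 2)) ^ 2 ≤ (a ^ (p - 1) + b ^ (p - 1)) * (a + b) := by
    have ka := key a ha
    have kb := key b hb
    have hx : 2 * (a ^ (p / 2) * b ^ (p / 2)) ≤ a ^ (p - 1) * b + b ^ (p - 1) * a := by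
      refine (pow_le_pow_iff_left₀ (by positivity) (by positivity) two_ne_zero).mp ?_
      have : (2 * (a ^ (p / 2) * b ^ (p / 2))) ^ 2 = 4 * ((a ^ (p - 1) * b) * (b ^ (p - 1) * a)) := by
        calc _ = 4 * ((a ^ (p / 2)) ^ 2 * (b ^ (p / 2)) ^ 2) := by ring
          _ = _ := by rw [ka, kb]; ring
      rw [this]
      nlinarith [sq_nonneg (a ^ (p - 1) * b - b ^ (p - 1) * a)]
    nlinarith
  have h2 := cp_le_one hp
  nlinarith [sq_nonneg (a ^ (p / 2) + b ^ (p / 2))]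

/-- `ψ` -/
def psi (p y : ℝ) : ℝ := phi (p / 2 + 1) y

lemma psi_nonneg_eq {p y : ℝ} (hp : 1 < p) (hy : 0 ≤ y) : psi p y = y ^ (p / 2) := by
  unfold psi
  rw [phi_nonneg_eq (by linarith) hy]
  congr 1
  ring

lemma psi_neg (p y : ℝ) : psi p (-y) = - psi p y := phi_neg _ _

lemma sv_aux {p a b : ℝ} (hp : 1 < p) (hab : b ≤ a) :
    cp p * (psi p a - psi p b) ^ 2 ≤ (phi p a - phi p b) * (a - b) := by
  rcases le_total 0 b with hb | hb
  · have ha := hb.trans hab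
    rw [psi_nonneg_eq hp ha, psi_nonneg_eq hp hb, phi_nonneg_eq hp ha, phi_nonneg_eq hp hb]
    exact sv_pos' hp hb hab
  · obtain ⟨b', rfl⟩ : ∃ c, b = -c := ⟨-b, by ring⟩
    have hb' : 0 ≤ b' := by linarith
    rcases le_total 0 a with ha | ha
    · rw [psi_neg, phi_neg, psi_nonneg_eq hp ha, psi_nonneg_eq hp hb', phi_nonneg_eq hp ha,
        phi_nonneg_eq hp hb']
      simpa using sv_mixed hp ha hb'
    · obtain ⟨a', rfl⟩ : ∃ c, a = -c := ⟨-a, by ring⟩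
      have ha' : 0 ≤ a' := by linarith
      rw [psi_neg, phi_neg, psi_neg, phi_neg, psi_nonneg_eq hp ha', psi_nonneg_eq hp hb',
        phi_nonneg_eq hp ha', phi_nonneg_eq hp hb']
      have := sv_pos' (a := b') (b := a') hp ha' (by linarith)
      convert this using 1 <;> ring

lemma sv {p : ℝ} (hp : 1 < p) (a b : ℝ) :
    cp p * (psi p a - psi p b) ^ 2 ≤ (phi p a - phi p b) * (a - b) := by
  rcases le_total b a with h | h
  · exact sv_aux hp h
  · have := sv_aux hp h
    convert this using 1 <;> ring

lemma holder {n : ℕ} {a b : ℝ} (hab : a.HolderConjugate b) {f g : (Fin n → Bool) → ℝ}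
    (hf : ∀ x, 0 ≤ f x) (hg : ∀ x, 0 ≤ g x) :
    cubeE (fun x => f x * g x) ≤
      (cubeE fun x => f x ^ a) ^ (1 / a) * (cubeE fun x => g x ^ b) ^ (1 / b) := by
  have h := Real.inner_le_Lp_mul_Lq_of_nonneg univ hab (fun x _ => hf x) (fun x _ => hg x)
  unfold cubeE
  have hN : (0:ℝ) < 2 ^ n := by positivity
  have hs1 : 0 ≤ ∑ x, f x ^ a := Finset.sum_nonneg fun x _ => Real.rpow_nonneg (hf x) _
  have hs2 : 0 ≤ ∑ x, g x ^ b := Finset.sum_nonneg fun x _ => Real.rpow_nonneg (hg x) _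
  rw [Real.div_rpow hs1 hN.le, Real.div_rpow hs2 hN.le, div_mul_div_comm,
    ← Real.rpow_add hN]
  have : 1 / a + 1 / b = 1 := by simpa using hab.inv_add_inv_eq_one
  rw [this, Real.rpow_one]
  gcongr

lemma cs {n : ℕ} (f g : (Fin n → Bool) → ℝ) :
    cubeE (fun x => f x * g x) ^ 2 ≤ cubeE (fun x => f x ^ 2) * cubeE (fun x => g x ^ 2) := by
  have h := Finset.sum_mul_sq_le_sq_mul_sq univ f g
  unfold cubeE
  rw [div_pow, div_mul_div_comm, ← pow_two]
  gcongr

lemma jensen {n : ℕ} {a : ℝ} (ha : 1 ≤ a) {f : (Fin n → Bool) → ℝ}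
    (hf : ∀ x, 0 ≤ f x) : cubeE f ≤ (cubeE fun x => f x ^ a) ^ (1 / a) := by
  rcases ha.eq_or_lt with rfl | ha
  · simp
  have h := holder (Real.HolderConjugate.conjExponent ha) hf (g := fun _ => 1) (fun _ => zero_le_one)
  simpa [cubeE_const] using h

lemma rpow_half_sq {p c : ℝ} (hc : 0 ≤ c) : (c ^ (p/2)) ^ 2 = c ^ p := by
  rw [← Real.rpow_natCast, ← Real.rpow_mul hc]
  congr 1
  push_cast
  ring

lemma mean_aux {n : ℕ} {p : ℝ} (hp : 1 < p) {P N : (Fin n → Bool) → ℝ}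
    (hP : ∀ x, 0 ≤ P x) (hN : ∀ x, 0 ≤ N x) (hPN : ∀ x, P x = 0 ∨ N x = 0)
    (hE : cubeE P = cubeE N) :
    cubeE (fun x => P x ^ (p / 2)) ^ 2 ≤
      3 / 4 * (cubeE (fun x => P x ^ p) + cubeE (fun x => N x ^ p)) := by
  have hX0 : 0 ≤ cubeE (fun x => P x ^ p) := cubeE_nonneg fun x => Real.rpow_nonneg (hP x) _
  have hY0 : 0 ≤ cubeE (fun x => N x ^ p) := cubeE_nonneg fun x => Real.rpow_nonneg (hN x) _
  have hZ0 : 0 ≤ cubeE (fun x => P x ^ (p/2)) := cubeE_nonneg fun x => Real.rpow_nonneg (hP x) _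
  have hm0 : 0 ≤ cubeE P := cubeE_nonneg hP
  rcases le_total p 2 with h2 | h2
  · have h1 : cubeE (fun x => P x ^ (p / 2)) ^ 2 ≤ cubeE (fun x => P x ^ p) := by
      have := cs (fun x => P x ^ (p / 2)) (fun _ => 1)
      simpa [cubeE_const, rpow_half_sq (hP _)] using this
    have h3 : cubeE (fun x => P x ^ (p / 2)) ^ 2 ≤ cubeE (fun x => N x ^ p) := by
      have j1 := jensen (a := 2 / p) (by rw [le_div_iff₀ (by linarith)]; linarith)
        (f := fun x => P x ^ (p / 2)) (fun x => Real.rpow_nonneg (hP x) _)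
      have e : ∀ x, (P x ^ (p / 2)) ^ (2 / p) = P x := by
        intro x
        rw [← Real.rpow_mul (hP x)]
        rw [show p / 2 * (2 / p) = 1 by field_simp, Real.rpow_one]
      simp_rw [e] at j1
      rw [show 1 / (2 / p) = p / 2 by field_simp] at j1
      have j2 := jensen hp.le hN
      calc cubeE (fun x => P x ^ (p / 2)) ^ 2 ≤ (cubeE P ^ (p / 2)) ^ 2 := by
            gcongr
        _ = cubeE N ^ p := by rw [rpow_half_sq hm0, hE]
        _ ≤ ((cubeE fun x => N x ^ p) ^ (1 / p)) ^ p := by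
            have : 0 ≤ cubeE N := hE ▸ hm0
            gcongr
        _ = _ := by
            rw [← Real.rpow_mul hY0, one_div_mul_cancel (by linarith), Real.rpow_one]
    linarith
  · set A : (Fin n → Bool) → ℝ := fun x => if P x = 0 then 0 else 1 with hA
    set B : (Fin n → Bool) → ℝ := fun x => if P x = 0 then 1 else 0 with hB
    have hAB : cubeE A + cubeE B = 1 := by
      rw [← cubeE_add, ← cubeE_const (n := n) 1]
      congr 1
      ext x
      simp only [hA, hB]
      split_ifs <;> simp
    have hB0 : 0 ≤ cubeE B := cubeE_nonneg fun x => by simp only [hB]; split_ifs <;> simp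
    have h1 : cubeE (fun x => P x ^ (p / 2)) ^ 2 ≤ cubeE (fun x => P x ^ p) * cubeE A := by
      have := cs (fun x => P x ^ (p / 2)) A
      have e1 : (fun x => P x ^ (p / 2) * A x) = fun x => P x ^ (p / 2) := by
        ext x
        simp only [hA]
        split_ifs with h
        · rw [h, Real.zero_rpow (by linarith)]; simp
        · simp
      have e2 : (fun x => A x ^ 2) = A := by
        ext x
        simp only [hA]
        split_ifs <;> simp
      rw [e1, e2] at this
      simpa [rpow_half_sq (hP _)] using this
    rcases le_total (cubeE A) (1 / 2) with hle | hle
    · nlinarith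
    have hβ : cubeE B ≤ 1 / 2 := by linarith
    have hc := Real.HolderConjugate.conjExponent hp
    set q := Real.conjExponent p with hq
    have hqe : q = p / (p - 1) := rfl
    have hp1 : 0 < p - 1 := by linarith
    have hq1 : 1 / q = (p - 1) / p := by rw [hqe]; field_simp
    have hq0 : 0 < q := by rw [hqe]; positivity
    have h3 : cubeE P ≤ (cubeE fun x => N x ^ p) ^ (1 / p) * cubeE B ^ (1 / q) := by
      have := holder hc hN (g := B) (fun x => by simp only [hB]; split_ifs <;> simp)
      have e1 : (fun x => N x * B x) = N := by
        ext x
        simp only [hB]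
        rcases hPN x with h | h <;> simp [h]
      have e2 : (fun x => B x ^ q) = B := by
        ext x
        simp only [hB]
        split_ifs
        · simp
        · rw [Real.zero_rpow hq0.ne']
      rw [e1, e2] at this
      rwa [hE]
    have h4 : cubeE (fun x => P x ^ (p - 1)) ≤ cubeE (fun x => P x ^ p) ^ (1 / q) := by
      have := jensen (a := q) hc.symm.lt.le (f := fun x => P x ^ (p - 1))
        (fun x => Real.rpow_nonneg (hP x) _)
      have e : ∀ x, (P x ^ (p - 1)) ^ q = P x ^ p := by
        intro x
        rw [← Real.rpow_mul (hP x), hqe]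
        congr 1
        field_simp
      simpa only [e] using this
    have h5 : cubeE (fun x => P x ^ (p / 2)) ^ 2 ≤ cubeE P * cubeE (fun x => P x ^ (p - 1)) := by
      have := cs (fun x => P x ^ (1 / 2 : ℝ)) (fun x => P x ^ ((p - 1) / 2))
      have e1 : ∀ x, P x ^ (1 / 2 : ℝ) * P x ^ ((p - 1) / 2) = P x ^ (p / 2) := by
        intro x
        rw [← Real.rpow_add_of_nonneg (hP x) (by norm_num) (by linarith)]
        congr 1
        ring
      simpa only [e1, rpow_half_sq (hP _), Real.rpow_one] using this
    have h6 : cubeE B ^ (1 / q) ≤ 3 / 4 := by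
      have hq2 : 1 / 2 ≤ 1 / q := by
        rw [hq1, div_le_div_iff₀ (by norm_num) (by linarith)]
        linarith
      calc cubeE B ^ (1 / q) ≤ (1 / 2 : ℝ) ^ (1 / q) := by gcongr
        _ ≤ (1 / 2 : ℝ) ^ (1 / 2 : ℝ) :=
            Real.rpow_le_rpow_of_exponent_ge (by norm_num) (by norm_num) hq2
        _ = √(1 / 2) := by rw [Real.sqrt_eq_rpow]
        _ ≤ 3 / 4 := by
            rw [Real.sqrt_le_left (by norm_num)]
            norm_num
    have h7 := Real.geom_mean_le_arith_mean2_weighted (w₁ := 1 / p) (w₂ := 1 / q)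
      (by positivity) (by positivity) hY0 hX0 (by simpa using hc.inv_add_inv_eq_one)
    have h8 : 1 / p ≤ 1 := by rw [div_le_one (by linarith)]; exact hp.le
    have h9 : 1 / q ≤ 1 := by rw [div_le_one hq0]; exact hc.symm.lt.le
    set X := cubeE (fun x => P x ^ p)
    set Y := cubeE (fun x => N x ^ p)
    have hXq : 0 ≤ X ^ (1 / q) := by positivity
    have hYp : 0 ≤ Y ^ (1 / p) := by positivity
    calc cubeE (fun x => P x ^ (p / 2)) ^ 2 ≤ cubeE P * cubeE (fun x => P x ^ (p - 1)) := h5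
      _ ≤ (Y ^ (1 / p) * cubeE B ^ (1 / q)) * X ^ (1 / q) := by
            have : 0 ≤ cubeE (fun x => P x ^ (p - 1)) :=
              cubeE_nonneg fun x => Real.rpow_nonneg (hP x) _
            gcongr
      _ ≤ (Y ^ (1 / p) * (3 / 4)) * X ^ (1 / q) := by gcongr
      _ = 3 / 4 * (Y ^ (1 / p) * X ^ (1 / q)) := by ring
      _ ≤ 3 / 4 * (X + Y) := by nlinarith

lemma mean_psi {n : ℕ} {p : ℝ} (hp : 1 < p) {u : (Fin n → Bool) → ℝ} (hu : cubeE u = 0) :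
    cubeE (fun x => psi p (u x)) ^ 2 ≤ 3 / 4 * cubeE (fun x => |u x| ^ p) := by
  set P : (Fin n → Bool) → ℝ := fun x => max (u x) 0 with hPd
  set N : (Fin n → Bool) → ℝ := fun x => max (-u x) 0 with hNd
  have hP : ∀ x, 0 ≤ P x := fun x => le_max_right _ _
  have hN : ∀ x, 0 ≤ N x := fun x => le_max_right _ _
  have hPN : ∀ x, P x = 0 ∨ N x = 0 := by
    intro x
    rcases le_total 0 (u x) with h | h
    · right; simp [hNd, h]
    · left; simp [hPd, h]
  have hE : cubeE P = cubeE N := by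
    have := cubeE_sub P N
    have e : (fun x => P x - N x) = u := by
      ext x
      rcases le_total 0 (u x) with h | h <;> simp [hPd, hNd, h]
    rw [e, hu] at this
    linarith
  have h1 := mean_aux hp hP hN hPN hE
  have h2 := mean_aux hp hN hP (fun x => (hPN x).symm) hE.symm
  have e1 : (fun x => psi p (u x)) = fun x => P x ^ (p / 2) - N x ^ (p / 2) := by
    ext x
    rcases le_total 0 (u x) with h | h
    · simp only [hPd, hNd]
      rw [max_eq_left h, max_eq_right (by linarith), psi_nonneg_eq hp h,
        Real.zero_rpow (by linarith), sub_zero]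
    · simp only [hPd, hNd]
      rw [max_eq_right h, max_eq_left (by linarith), ← psi_nonneg_eq hp (neg_nonneg.mpr h), psi_neg,
        Real.zero_rpow (by linarith)]
      ring
  have e2 : (fun x => |u x| ^ p) = fun x => P x ^ p + N x ^ p := by
    ext x
    rcases le_total 0 (u x) with h | h
    · simp only [hPd, hNd]
      rw [max_eq_left h, max_eq_right (by linarith), abs_of_nonneg h,
        Real.zero_rpow (by linarith), add_zero]
    · simp only [hPd, hNd]
      rw [max_eq_right h, max_eq_left (by linarith), abs_of_nonpos h,
        Real.zero_rpow (by linarith), zero_add]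
  rw [e1, e2, cubeE_add, cubeE_sub]
  have hZ0 : 0 ≤ cubeE (fun x => P x ^ (p/2)) := cubeE_nonneg fun x => Real.rpow_nonneg (hP x) _
  have hW0 : 0 ≤ cubeE (fun x => N x ^ (p/2)) := cubeE_nonneg fun x => Real.rpow_nonneg (hN x) _
  rcases le_total (cubeE (fun x => P x ^ (p/2))) (cubeE (fun x => N x ^ (p/2))) with h | h <;>
  nlinarith

lemma psi_sq {p : ℝ} (hp : 1 < p) (y : ℝ) : psi p y ^ 2 = |y| ^ p := by
  unfold psi
  rw [← sq_abs, abs_phi (by linarith), show p / 2 + 1 - 1 = p / 2 by ring,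
    rpow_half_sq (abs_nonneg y)]

/-- The infinitesimal spectral gap. -/
lemma base {n : ℕ} {p : ℝ} (hp : 1 < p) {u : (Fin n → Bool) → ℝ} (hu : cubeE u = 0) :
    1 / 4 * cp p * cubeE (fun x => |u x| ^ p) ≤
      cubeE (fun x => phi p (u x) * mult (fun k => (k : ℝ)) u x) := by
  have h1 := poincare (fun x => psi p (u x))
  have h2 := mean_psi hp hu
  simp_rw [psi_sq hp] at h1
  have h3 : cp p * cubeE (fun x => psi p (u x) * mult (fun k => (k : ℝ)) (fun x => psi p (u x)) x) ≤
      cubeE (fun x => phi p (u x) * mult (fun k => (k : ℝ)) u x) := by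
    rw [energy_eq (fun x => psi p (u x)) (fun x => psi p (u x)),
      energy_eq u (fun x => phi p (u x)), Finset.mul_sum]
    refine Finset.sum_le_sum fun j _ => ?_
    rw [← mul_div_assoc, ← cubeE_mul_left]
    gcongr
    refine cubeE_mono fun x => ?_
    have := sv hp (u x) (u (flip j x))
    rwa [pow_two] at this
  have h4 := cp_pos hp
  nlinarith

lemma holder_phi {n : ℕ} {p : ℝ} (hp : 1 < p) (u v : (Fin n → Bool) → ℝ) :
    cubeE (fun x => phi p (u x) * v x) ≤
      cubeE (fun x => |u x| ^ p) ^ ((p - 1) / p) * cubeE (fun x => |v x| ^ p) ^ (1 / p) := by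
  have hc := (Real.HolderConjugate.conjExponent hp).symm
  have hqe : Real.conjExponent p = p / (p - 1) := rfl
  have hp1 : 0 < p - 1 := by linarith
  have h := holder hc (f := fun x => |u x| ^ (p - 1)) (g := fun x => |v x|)
    (fun x => by positivity) (fun x => by positivity)
  have e : ∀ x, (|u x| ^ (p - 1)) ^ Real.conjExponent p = |u x| ^ p := by
    intro x
    rw [← Real.rpow_mul (abs_nonneg _), hqe]
    congr 1
    field_simp
  simp only [e] at h
  rw [hqe, show 1 / (p / (p - 1)) = (p - 1) / p by field_simp] at h
  refine le_trans (cubeE_mono fun x => ?_) h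
  rw [← abs_phi hp, ← abs_mul]
  exact le_abs_self _

lemma resolvent {n : ℕ} {p k s : ℝ} (hp : 1 < p) (hk : 0 < k) (hs : 0 < s)
    (hb : ∀ u : (Fin n → Bool) → ℝ, cubeE u = 0 → k * cubeE (fun x => |u x| ^ p) ≤
      cubeE (fun x => phi p (u x) * mult (fun k => (k : ℝ)) u x))
    {u : (Fin n → Bool) → ℝ} (hu : cubeE u = 0) :
    cubeE (fun x => phi p (u x) * mult (fun k => (s + k)⁻¹) u x) ≤
      (s + k)⁻¹ * cubeE (fun x => |u x| ^ p) := by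
  set v := mult (fun k => (s + k)⁻¹) u with hv
  have hv0 : cubeE v = 0 := by
    rw [← fourier_empty, hv, fourier_mult, fourier_empty, hu, mul_zero]
  have h1 := hb v hv0
  have h2 : s * cubeE (fun x => |v x| ^ p) +
      cubeE (fun x => phi p (v x) * mult (fun k => (k : ℝ)) v x) =
      cubeE (fun x => phi p (v x) * u x) := by
    rw [cubeE_mul_mult, parseval]
    have : cubeE (fun x => |v x| ^ p) = cubeE (fun x => phi p (v x) * v x) := by
      simp_rw [phi_mul_self hp]
    rw [this, parseval, Finset.mul_sum, ← Finset.sum_add_distrib]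
    refine Finset.sum_congr rfl fun S _ => ?_
    rw [hv, fourier_mult]
    have : s + (S.card : ℝ) ≠ 0 := by positivity
    field_simp
  have h3 := holder_phi hp v u
  have h4 := holder_phi hp u v
  set U := cubeE (fun x => |u x| ^ p)
  set V := cubeE (fun x => |v x| ^ p)
  have hU : 0 ≤ U := cubeE_nonneg fun x => by positivity
  have hV : 0 ≤ V := cubeE_nonneg fun x => by positivity
  have split : ∀ W : ℝ, 0 ≤ W → W ^ ((p - 1) / p) * W ^ (1 / p) = W := by
    intro W hW
    have hp0 : 0 < p := by linarith
    rw [← Real.rpow_add_of_nonneg hW (div_nonneg (by linarith) hp0.le) (by positivity)]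
    rw [show (p - 1) / p + 1 / p = 1 by field_simp; ring, Real.rpow_one]
  have h5 : (s + k) * V ^ (1 / p) ≤ U ^ (1 / p) := by
    rcases hV.eq_or_lt with h | h
    · rw [← h, Real.zero_rpow (by positivity), mul_zero]
      positivity
    · have hpos : 0 < V ^ ((p - 1) / p) := by positivity
      refine le_of_mul_le_mul_left ?_ hpos
      calc V ^ ((p - 1) / p) * ((s + k) * V ^ (1 / p)) = (s + k) * (V ^ ((p - 1) / p) * V ^ (1 / p)) := by ring
        _ = (s + k) * V := by rw [split V hV]
        _ ≤ _ := by linarith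
  have h6 : V ^ (1 / p) ≤ (s + k)⁻¹ * U ^ (1 / p) := by
    rw [inv_mul_eq_div, le_div_iff₀ (by positivity)]
    linarith
  calc _ ≤ U ^ ((p - 1) / p) * V ^ (1 / p) := h4
    _ ≤ U ^ ((p - 1) / p) * ((s + k)⁻¹ * U ^ (1 / p)) := by gcongr
    _ = (s + k)⁻¹ * (U ^ ((p - 1) / p) * U ^ (1 / p)) := by ring
    _ = _ := by rw [split U hU]

lemma frac {n : ℕ} {p k γ : ℝ} (hp : 1 < p) (hk : 0 < k) (hγ : 0 < γ) (hγ1 : γ ≤ 1)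
    (hb : ∀ u : (Fin n → Bool) → ℝ, cubeE u = 0 → k * cubeE (fun x => |u x| ^ p) ≤
      cubeE (fun x => phi p (u x) * mult (fun k => (k : ℝ)) u x))
    {u : (Fin n → Bool) → ℝ} (hu : cubeE u = 0) :
    k ^ γ * cubeE (fun x => |u x| ^ p) ≤
      cubeE (fun x => phi p (u x) * mult (fun k => (k : ℝ) ^ γ) u x) := by
  rcases hγ1.eq_or_lt with rfl | hγ1
  · simpa using hb u hu
  have hγm : γ ∈ Set.Ioo (0:ℝ) 1 := ⟨hγ, hγ1⟩
  rw [cubeE_mul_mult]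
  set c : Finset (Fin n) → ℝ := fun S => cubeFourier u S * cubeFourier (fun x => phi p (u x)) S
  set U := cubeE (fun x => |u x| ^ p) with hU
  have hUc : U = ∑ S, c S := by
    rw [← parseval, hU]
    simp_rw [phi_mul_self hp]
  have hI := Real.integral_rpowIntegrand₀₁_one_pos hγm
  refine le_of_mul_le_mul_right ?_ hI
  have e1 : k ^ γ * U * (∫ t in Set.Ioi 0, Real.rpowIntegrand₀₁ γ t 1) =
      ∫ t in Set.Ioi 0, Real.rpowIntegrand₀₁ γ t k * U := by
    rw [integral_mul_const, Real.integral_rpowIntegrand₀₁_eq_rpow_mul_const hγm hk.le]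
    ring
  have hint : ∀ S : Finset (Fin n), IntegrableOn
      (fun t => Real.rpowIntegrand₀₁ γ t (S.card : ℝ) * c S) (Set.Ioi 0) := fun S =>
    (Real.integrableOn_rpowIntegrand₀₁_Ioi hγm (Nat.cast_nonneg _)).mul_const _
  have e2 : (∑ S : Finset (Fin n), (S.card : ℝ) ^ γ * c S) *
      (∫ t in Set.Ioi 0, Real.rpowIntegrand₀₁ γ t 1) =
      ∫ t in Set.Ioi 0, ∑ S : Finset (Fin n), Real.rpowIntegrand₀₁ γ t (S.card : ℝ) * c S := by
    rw [integral_finsetSum _ (fun S _ => hint S), Finset.sum_mul]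
    refine Finset.sum_congr rfl fun S _ => ?_
    rw [integral_mul_const,
      Real.integral_rpowIntegrand₀₁_eq_rpow_mul_const hγm (Nat.cast_nonneg _)]
    ring
  rw [e1, e2]
  refine setIntegral_mono_on ?_ ?_ measurableSet_Ioi ?_
  · exact (Real.integrableOn_rpowIntegrand₀₁_Ioi hγm hk.le).mul_const _
  · exact integrable_finsetSum _ (fun S _ => hint S)
  · intro s hs
    have hs : 0 < s := hs
    have hr := resolvent hp hk hs hb hu
    rw [cubeE_mul_mult] at hr
    have e3 : ∑ S : Finset (Fin n), Real.rpowIntegrand₀₁ γ s (S.card : ℝ) * c S =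
        s ^ γ * (s⁻¹ * U - ∑ S : Finset (Fin n), (s + (S.card : ℝ))⁻¹ * c S) := by
      rw [hUc, Finset.mul_sum, ← Finset.sum_sub_distrib, Finset.mul_sum]
      refine Finset.sum_congr rfl fun S _ => ?_
      unfold Real.rpowIntegrand₀₁
      ring
    rw [e3, Real.rpowIntegrand₀₁, mul_assoc]
    gcongr
    rw [sub_mul]
    gcongr

lemma decay {n : ℕ} {p K γ : ℝ} (hp : 1 < p) (hγ : 0 < γ)
    (hb : ∀ u : (Fin n → Bool) → ℝ, cubeE u = 0 → K * cubeE (fun x => |u x| ^ p) ≤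
      cubeE (fun x => phi p (u x) * mult (fun k => (k : ℝ) ^ γ) u x))
    {u : (Fin n → Bool) → ℝ} (hu : cubeE u = 0) {t : ℝ} (ht : 0 < t) :
    cubeE (fun x => |heatFrac γ t u x| ^ p) ≤
      Real.exp (-K * t * p) * cubeE (fun x => |u x| ^ p) := by
  have hm : ∀ s, heatFrac γ s u = mult (fun k => Real.exp (-s * (k : ℝ) ^ γ)) u := fun s => rfl
  have h0 : ∀ s, cubeE (heatFrac γ s u) = 0 := by
    intro s
    rw [← fourier_empty, hm, fourier_mult, fourier_empty, hu, mul_zero]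
  have hd1 : ∀ x s, HasDerivAt (fun s => heatFrac γ s u x)
      (-(mult (fun k => (k : ℝ) ^ γ) (heatFrac γ s u) x)) s := by
    intro x s
    have : -(mult (fun k => (k : ℝ) ^ γ) (heatFrac γ s u) x) =
        ∑ S : Finset (Fin n), (Real.exp (-s * (S.card : ℝ) ^ γ) * (-1 * (S.card : ℝ) ^ γ)) *
          cubeFourier u S * walsh S x := by
      conv_lhs => unfold mult
      rw [← Finset.sum_neg_distrib]
      refine Finset.sum_congr rfl fun S _ => ?_
      rw [hm, fourier_mult]
      ring
    rw [this]
    unfold heatFrac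
    refine HasDerivAt.fun_sum fun S _ => ?_
    refine HasDerivAt.mul_const (HasDerivAt.mul_const ?_ _) _
    exact (((hasDerivAt_id s).neg.mul_const _).exp)
  have hd2 : ∀ s, HasDerivAt (fun s => cubeE (fun x => |heatFrac γ s u x| ^ p))
      (-p * cubeE (fun x => phi p (heatFrac γ s u x) *
        mult (fun k => (k : ℝ) ^ γ) (heatFrac γ s u) x)) s := by
    intro s
    rw [← cubeE_mul_left]
    unfold cubeE
    refine HasDerivAt.div_const (HasDerivAt.fun_sum fun x _ => ?_) _
    have := (hasDerivAt_abs_rpow (heatFrac γ s u x) hp).comp s (hd1 x s)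
    refine this.congr_deriv ?_
    unfold phi
    ring
  have hd3 : ∀ s, HasDerivAt (fun s => Real.exp (K * s * p) * cubeE (fun x => |heatFrac γ s u x| ^ p))
      (Real.exp (K * s * p) * (K * 1 * p) * cubeE (fun x => |heatFrac γ s u x| ^ p) +
       Real.exp (K * s * p) * (-p * cubeE (fun x => phi p (heatFrac γ s u x) *
        mult (fun k => (k : ℝ) ^ γ) (heatFrac γ s u) x))) s := fun s =>
    HasDerivAt.mul ((((hasDerivAt_id s).const_mul K).mul_const p).exp) (hd2 s)
  have hanti := antitone_of_deriv_nonpos (fun s => (hd3 s).differentiableAt) (fun s => by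
    rw [(hd3 s).deriv]
    have h1 := hb _ (h0 s)
    have h2 : 0 < Real.exp (K * s * p) * p := by
      have := Real.exp_pos (K * s * p)
      have : 0 < p := by linarith
      positivity
    nlinarith)
  have h := hanti ht.le
  simp only [mul_zero, zero_mul, Real.exp_zero, one_mul] at h
  have hz : heatFrac γ 0 u = u := by
    ext x
    simp [heatFrac, inversion]
  rw [hz] at h
  rw [show -K * t * p = -(K * t * p) by ring, Real.exp_neg, inv_mul_eq_div,
    le_div_iff₀ (Real.exp_pos _)]
  linarith

end Cube

/-- Spectral gap for the fractional heat semigroup in `L^p`, `1 < p < ∞`,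
`0 < γ ≤ 1`: there is an absolute constant `C₁ > 0` such that with
`k_γ = (C₁ · c_p)^γ`, `c_p = 2 min(1/p, 1/p')`, `p' = p/(p-1)`, one has
`‖e^{tΔ_γ}(f - Ef)‖_p ≤ e^{-k_γ t} ‖f - Ef‖_p` for all `n`, `f`, `t > 0`. -/
theorem stmt6 :
    ∃ C₁ : ℝ, 0 < C₁ ∧
      ∀ γ : ℝ, 0 < γ → γ ≤ 1 →
        ∀ p : ℝ, 1 < p →
          ∀ (n : ℕ) (f : (Fin n → Bool) → ℝ) (t : ℝ), 0 < t →
            pNorm p (heatFrac γ t fun x => f x - cubeE f) ≤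
              Real.exp (-((C₁ * (2 * min (1 / p) (1 / (p / (p - 1))))) ^ γ) * t) *
                pNorm p (fun x => f x - cubeE f) := by
  refine ⟨1 / 4, by norm_num, ?_⟩
  intro γ hγ hγ1 p hp n f t ht
  have hu : cubeE (fun x => f x - cubeE f) = 0 := by
    rw [Cube.cubeE_sub, Cube.cubeE_const, sub_self]
  set u : (Fin n → Bool) → ℝ := fun x => f x - cubeE f
  have hk : 0 < 1 / 4 * Cube.cp p := by
    have := Cube.cp_pos hp
    positivity
  have h := Cube.decay hp hγ (fun u hu => Cube.frac hp hk hγ hγ1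
    (fun v hv => Cube.base hp hv) hu) hu ht
  have hp0 : 0 < p := by linarith
  unfold pNorm
  change _ ≤ Real.exp (-((1 / 4 * Cube.cp p) ^ γ) * t) * _
  have hU : 0 ≤ cubeE (fun x => |u x| ^ p) := Cube.cubeE_nonneg fun x => by positivity
  calc _ ≤ (Real.exp (-((1 / 4 * Cube.cp p) ^ γ) * t * p) * cubeE (fun x => |u x| ^ p)) ^ (1 / p) := by
        apply Real.rpow_le_rpow (Cube.cubeE_nonneg fun x => by positivity) h (by positivity)
    _ = _ := by
        rw [Real.mul_rpow (Real.exp_pos _).le hU, ← Real.exp_mul, mul_assoc,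
          mul_one_div_cancel hp0.ne', mul_one]
end
end

section
/- Let k ∈ ℕ with k ≥ 1, let n ∈ ℕ, and let f : C_n → ℝ have Fourier coefficients satisfying f̂(∅) = 0 and f̂(S) = 0 whenever |S| > k. Then for every t ≥ 3k·log 3, one has ‖e^{tΔ} f‖₁ ≤ e^{−t/2} ‖f‖₁. -/
open Finset MeasureTheory Real

noncomputable section

lemma le_of_sq_le_sq_aux {a b : ℝ} (h : a ^ 2 ≤ b ^ 2) (hb : 0 ≤ b) : a ≤ b :=
  abs_le_of_sq_le_sq' h hb |>.2

def FF {n : ℕ} (T : Finset (Fin n)) (a : Finset (Fin n) → ℝ) (x : Fin n → Bool) : ℝ :=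
  ∑ S ∈ T.powerset, a S * walsh S x

def sg {n : ℕ} (i : Fin n) (x : Fin n → Bool) : ℝ := if x i then (1 : ℝ) else -1

lemma sg_sq {n : ℕ} (i : Fin n) (x : Fin n → Bool) : sg i x ^ 2 = 1 := by
  unfold sg; split_ifs <;> norm_num

def flip' {n : ℕ} (i : Fin n) (x : Fin n → Bool) : Fin n → Bool := Function.update x i (!x i)

lemma flip'_inv {n : ℕ} (i : Fin n) : Function.Involutive (flip' i : (Fin n → Bool) → _) := by
  intro x; ext j; by_cases h : j = i
  · subst h; simp [flip']
  · simp [flip', h]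

lemma sg_flip {n : ℕ} (i : Fin n) (x : Fin n → Bool) : sg i (flip' i x) = - sg i x := by
  unfold sg flip'; cases h : x i <;> simp

lemma FF_flip {n : ℕ} (i : Fin n) (T : Finset (Fin n)) (hi : i ∉ T) (a) (x : Fin n → Bool) :
    FF T a (flip' i x) = FF T a x := by
  unfold FF
  refine Finset.sum_congr rfl fun S hS => ?_
  congr 1
  unfold walsh
  refine Finset.prod_congr rfl fun j hj => ?_
  have : j ≠ i := fun h => hi (h ▸ Finset.mem_powerset.1 hS hj)
  simp [flip', this]

lemma sum_odd {n : ℕ} (i : Fin n) (u : (Fin n → Bool) → ℝ) (hu : ∀ x, u (flip' i x) = u x) :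
    ∑ x, sg i x * u x = 0 := by
  have h := Equiv.sum_comp (flip'_inv i).toPerm (fun x => sg i x * u x)
  simp only [Function.Involutive.coe_toPerm, sg_flip, hu, neg_mul, Finset.sum_neg_distrib] at h
  linarith

lemma FF_insert {n : ℕ} (i : Fin n) (T : Finset (Fin n)) (hi : i ∉ T) (a) (x : Fin n → Bool) :
    FF (insert i T) a x = FF T a x + sg i x * FF T (fun S => a (insert i S)) x := by
  unfold FF
  rw [Finset.sum_powerset_insert hi, Finset.mul_sum]
  congr 1
  refine Finset.sum_congr rfl fun S hS => ?_
  have : i ∉ S := fun h => hi (Finset.mem_powerset.1 hS h)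
  unfold walsh
  rw [Finset.prod_insert this]
  unfold sg; ring

lemma sum_FF_sq_insert {n : ℕ} (i : Fin n) (T : Finset (Fin n)) (hi : i ∉ T) (a) :
    ∑ x, FF (insert i T) a x ^ 2 =
      ∑ x, FF T a x ^ 2 + ∑ x, FF T (fun S => a (insert i S)) x ^ 2 := by
  have h := sum_odd i (fun x => 2 * FF T a x * FF T (fun S => a (insert i S)) x)
    (fun x => by simp only [FF_flip i T hi])
  rw [← Finset.sum_add_distrib, ← sub_eq_zero, ← Finset.sum_sub_distrib, ← h]
  refine Finset.sum_congr rfl fun x _ => ?_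
  rw [FF_insert i T hi]
  linear_combination (FF T (fun S => a (insert i S)) x)^2 * sg_sq i x

lemma sum_FF_four_insert {n : ℕ} (i : Fin n) (T : Finset (Fin n)) (hi : i ∉ T) (a) :
    ∑ x, FF (insert i T) a x ^ 4 =
      ∑ x, FF T a x ^ 4 + 6 * ∑ x, FF T a x ^ 2 * FF T (fun S => a (insert i S)) x ^ 2
        + ∑ x, FF T (fun S => a (insert i S)) x ^ 4 := by
  have h := sum_odd i (fun x => 4 * FF T a x ^ 3 * FF T (fun S => a (insert i S)) x +
    4 * FF T a x * FF T (fun S => a (insert i S)) x ^ 3)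
    (fun x => by simp only [FF_flip i T hi])
  rw [Finset.mul_sum, ← Finset.sum_add_distrib, ← Finset.sum_add_distrib,
    ← sub_eq_zero, ← Finset.sum_sub_distrib, ← h]
  refine Finset.sum_congr rfl fun x _ => ?_
  rw [FF_insert i T hi]
  generalize FF T (fun S => a (insert i S)) x = q
  generalize FF T a x = p
  have := sg_sq i x
  generalize sg i x = s at *
  linear_combination (6 * p^2*q^2 + 4 * p * q^3 * s + q^4 * (s^2+1)) * this

lemma parseval {n : ℕ} (T : Finset (Fin n)) : ∀ a : Finset (Fin n) → ℝ,
    ∑ x, FF T a x ^ 2 = 2 ^ n * ∑ S ∈ T.powerset, a S ^ 2 := by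
  induction T using Finset.induction_on with
  | empty => intro a; simp [FF, walsh]
  | insert i T hi ih =>
    intro a
    rw [sum_FF_sq_insert i T hi, ih, ih, Finset.sum_powerset_insert hi]; ring

lemma bonami {n : ℕ} (T : Finset (Fin n)) : ∀ (k : ℕ) (a : Finset (Fin n) → ℝ),
    (∀ S ∈ T.powerset, k < S.card → a S = 0) →
    2 ^ n * ∑ x, FF T a x ^ 4 ≤ 9 ^ k * (∑ x, FF T a x ^ 2) ^ 2 := by
  induction T using Finset.induction_on with
  | empty =>
    intro k a _
    simp only [FF, walsh, Finset.powerset_empty, Finset.sum_singleton, Finset.prod_empty, mul_one,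
      Finset.sum_const, Finset.card_univ, Fintype.card_pi, Fintype.card_bool, Finset.prod_const,
      Fintype.card_fin, nsmul_eq_mul, Nat.cast_pow, Nat.cast_ofNat]
    have h9 : (1:ℝ) ≤ 9 ^ k := one_le_pow₀ (by norm_num)
    have : (0:ℝ) ≤ (2 ^ n * a ∅ ^ 2)^2 := sq_nonneg _
    nlinarith
  | insert i T hi ih =>
    intro k a ha
    have hg : ∀ S ∈ T.powerset, k < S.card → a S = 0 := fun S hS =>
      ha S (Finset.powerset_mono.2 (Finset.subset_insert i T) hS)
    have hins : ∀ S ∈ T.powerset, insert i S ∈ (insert i T).powerset ∧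
        (insert i S).card = S.card + 1 := fun S hS => by
      have hS' := Finset.mem_powerset.1 hS
      exact ⟨Finset.mem_powerset.2 (Finset.insert_subset_insert i hS'),
        Finset.card_insert_of_notMem fun h => hi (hS' h)⟩
    have ihg := ih k a hg
    rcases k with _ | j
    · have hz : ∀ x, FF (insert i T) a x = FF T a x := fun x => by
        rw [FF_insert i T hi]
        have : FF T (fun S => a (insert i S)) x = 0 := by
          unfold FF
          refine Finset.sum_eq_zero fun S hS => ?_
          beta_reduce
          rw [ha _ (hins S hS).1 (by rw [(hins S hS).2]; omega), zero_mul]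
        rw [this]; ring
      simpa only [hz] using ihg
    · have ihh := ih j (fun S => a (insert i S)) fun S hS hc =>
        ha _ (hins S hS).1 (by rw [(hins S hS).2]; omega)
      rw [sum_FF_sq_insert i T hi, sum_FF_four_insert i T hi]
      have cs := Finset.sum_mul_sq_le_sq_mul_sq Finset.univ (fun x => FF T a x ^ 2)
        (fun x => FF T (fun S => a (insert i S)) x ^ 2)
      simp only [← pow_mul] at cs
      norm_num at cs
      have hA : 0 ≤ ∑ x, FF T a x ^ 2 := Finset.sum_nonneg fun _ _ => sq_nonneg _
      have hB : 0 ≤ ∑ x, FF T (fun S => a (insert i S)) x ^ 2 :=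
        Finset.sum_nonneg fun _ _ => sq_nonneg _
      have hB4 : 0 ≤ ∑ x, FF T (fun S => a (insert i S)) x ^ 4 :=
        Finset.sum_nonneg fun _ _ => by positivity
      generalize ∑ x, FF T a x ^ 2 = A at *
      generalize ∑ x, FF T (fun S => a (insert i S)) x ^ 2 = B at *
      generalize ∑ x, FF T a x ^ 4 = A4 at *
      generalize ∑ x, FF T (fun S => a (insert i S)) x ^ 4 = B4 at *
      generalize ∑ x, FF T a x ^ 2 * FF T (fun S => a (insert i S)) x ^ 2 = C at *
      have hN : (0:ℝ) < 2 ^ n := by positivity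
      have hq : (0:ℝ) < 9 ^ j := by positivity
      rw [pow_succ (9:ℝ) j] at ihg ⊢
      generalize (2:ℝ)^n = N at *
      generalize (9:ℝ)^j = q at *
      have hC : N * C ≤ 3 * q * A * B := by
        apply le_of_sq_le_sq_aux _ (by positivity)
        calc (N * C)^2 = N^2 * C^2 := by ring
          _ ≤ N^2 * (A4 * B4) := by gcongr
          _ = (N * A4) * (N * B4) := by ring
          _ ≤ (q * 9 * A^2) * (q * B^2) := by
            apply mul_le_mul ihg ihh (by positivity) (by positivity)
          _ = _ := by ring
      nlinarith [mul_nonneg hq.le (sq_nonneg B)]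

lemma inversion {n : ℕ} (f : (Fin n → Bool) → ℝ) (x) :
    FF Finset.univ (cubeFourier f) x = f x := by
  have key : ∀ y : Fin n → Bool, ∑ S : Finset (Fin n), walsh S y * walsh S x =
      if y = x then 2 ^ n else 0 := by
    intro y
    have h := Finset.prod_one_add (f := fun i => sg i y * sg i x) (Finset.univ : Finset (Fin n))
    have h2 : ∑ S : Finset (Fin n), walsh S y * walsh S x = ∏ i, (1 + sg i y * sg i x) := by
      rw [h, Finset.powerset_univ]
      refine Finset.sum_congr rfl fun S _ => ?_
      rw [Finset.prod_mul_distrib]; rfl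
    rw [h2]
    split_ifs with e
    · subst e
      have : ∀ i, 1 + sg i y * sg i y = 2 := fun i => by linear_combination sg_sq i y
      simp [this]
    · obtain ⟨i, hi⟩ := Function.ne_iff.1 e
      refine Finset.prod_eq_zero (Finset.mem_univ i) ?_
      unfold sg
      revert hi
      cases y i <;> cases x i <;> simp
  unfold FF cubeFourier cubeE
  rw [Finset.powerset_univ]
  simp only [div_mul_eq_mul_div, Finset.sum_mul, ← Finset.sum_div]
  rw [Finset.sum_comm]
  simp only [mul_assoc, ← Finset.mul_sum, key]
  simp

/-- Heat smoothing for band-limited functions: if `f : C_n → ℝ` has `f̂(∅) = 0`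
and `f̂(S) = 0` for `|S| > k` (`k ≥ 1`), then for every `t ≥ 3k log 3`,
`‖e^{tΔ} f‖₁ ≤ e^{-t/2} ‖f‖₁`. -/
theorem stmt8 (k : ℕ) (hk : 1 ≤ k) (n : ℕ) (f : (Fin n → Bool) → ℝ)
    (h0 : cubeFourier f ∅ = 0)
    (hband : ∀ S : Finset (Fin n), k < S.card → cubeFourier f S = 0)
    (t : ℝ) (ht : 3 * (k : ℝ) * Real.log 3 ≤ t) :
    pNorm 1 (heat1 t f) ≤ Real.exp (-t / 2) * pNorm 1 f := by
  have hl : 0 < Real.log 3 := Real.log_pos (by norm_num)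
  have hkl : 0 ≤ (k:ℝ) * Real.log 3 := by positivity
  have ht0 : 0 ≤ t := by nlinarith
  have hb := bonami Finset.univ k (cubeFourier f) fun S _ => hband S
  have hp := parseval Finset.univ (cubeFourier f)
  simp only [inversion] at hb hp
  have hheat : ∀ x, heat1 t f x =
      FF Finset.univ (fun S => Real.exp (-t * (S.card : ℝ)) * cubeFourier f S) x := fun x => by
    unfold heat1 FF; rw [Finset.powerset_univ]
  have hp2 := parseval Finset.univ (fun S => Real.exp (-t * (S.card : ℝ)) * cubeFourier f S)
  simp only [← hheat] at hp2
  have hle : ∑ S ∈ (Finset.univ : Finset (Fin n)).powerset,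
      (Real.exp (-t * (S.card : ℝ)) * cubeFourier f S) ^ 2 ≤
      Real.exp (-t) ^ 2 * ∑ S ∈ (Finset.univ : Finset (Fin n)).powerset, cubeFourier f S ^ 2 := by
    rw [Finset.mul_sum]
    refine Finset.sum_le_sum fun S _ => ?_
    rw [mul_pow]
    rcases S.eq_empty_or_nonempty with rfl | hS
    · simp [h0]
    · have : (1:ℝ) ≤ S.card := by exact_mod_cast hS.card_pos
      gcongr
      nlinarith
  have c1 := Finset.sum_sq_le_sum_mul_sum_of_sq_eq_mul Finset.univ (r := fun x => f x ^ 2)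
    (f := fun x => |f x|) (g := fun x => |f x| ^ 3) (fun _ _ => abs_nonneg _)
    (fun _ _ => by positivity) (fun x _ => by
      rw [← sq_abs (f x)]; ring)
  have c2 := Finset.sum_sq_le_sum_mul_sum_of_sq_eq_mul Finset.univ (r := fun x => |f x| ^ 3)
    (f := fun x => f x ^ 2) (g := fun x => f x ^ 4) (fun _ _ => by positivity)
    (fun _ _ => by positivity) (fun x _ => by
      rw [← pow_mul, show f x ^ 4 = (f x ^2)^2 by ring, ← sq_abs (f x)]; ring)
  have c3 := Finset.sum_sq_le_sum_mul_sum_of_sq_eq_mul Finset.univ (r := fun x => |heat1 t f x|)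
    (f := fun x => (1:ℝ)) (g := fun x => heat1 t f x ^ 2) (fun _ _ => by positivity)
    (fun _ _ => by positivity) (fun x _ => by simp)
  simp at c3
  have s1 : 0 ≤ ∑ x, |f x| := Finset.sum_nonneg fun _ _ => abs_nonneg _
  have s2 : 0 ≤ ∑ x, f x ^ 2 := Finset.sum_nonneg fun _ _ => sq_nonneg _
  have hexp : Real.exp (-t) * 3 ^ k ≤ Real.exp (-t / 2) := by
    have : (3:ℝ) ^ k = Real.exp (k * Real.log 3) := by
      rw [Real.exp_nat_mul, Real.exp_log (by norm_num)]
    rw [this, ← Real.exp_add]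
    apply Real.exp_le_exp.2
    nlinarith
  have main : ∑ x, |heat1 t f x| ≤ Real.exp (-t / 2) * ∑ x, |f x| := by
    refine le_trans ?_ (mul_le_mul_of_nonneg_right hexp s1)
    have e0 := Real.exp_pos (-t)
    have hN : (0:ℝ) < 2 ^ n := by positivity
    have h9 : (9:ℝ) ^ k = (3 ^ k) ^ 2 := by rw [← pow_mul, mul_comm, pow_mul]; norm_num
    have h3 : (0:ℝ) < 3 ^ k := by positivity
    rw [h9] at hb
    generalize ∑ x, |f x| = a1 at *
    generalize ∑ x, f x ^ 2 = a2 at *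
    generalize ∑ x, |f x| ^ 3 = a3 at *
    generalize ∑ x, f x ^ 4 = a4 at *
    generalize ∑ x, |heat1 t f x| = b1 at *
    generalize ∑ x, heat1 t f x ^ 2 = b2 at *
    generalize (2:ℝ)^n = N at *
    generalize (3:ℝ)^k = q at *
    generalize Real.exp (-t) = e at *
    have key : N * a2 ≤ q ^ 2 * a1 ^ 2 := by
      rcases s2.eq_or_lt with h | h
      · rw [← h]; simp; positivity
      · have : a2 ^ 3 * (N * a2) ≤ a2 ^ 3 * (q ^ 2 * a1 ^ 2) := by
          calc a2 ^ 3 * (N * a2) = N * (a2 ^ 2) ^ 2 := by ring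
            _ ≤ N * (a1 * a3) ^ 2 := by gcongr
            _ = N * a1 ^ 2 * a3 ^ 2 := by ring
            _ ≤ N * a1 ^ 2 * (a2 * a4) := by gcongr
            _ = a1 ^ 2 * a2 * (N * a4) := by ring
            _ ≤ a1 ^ 2 * a2 * (q ^ 2 * a2 ^ 2) := by gcongr
            _ = _ := by ring
        exact le_of_mul_le_mul_left this (by positivity)
    apply le_of_sq_le_sq_aux _ (by positivity)
    calc b1 ^ 2 ≤ N * b2 := c3
      _ ≤ N * (N * (e ^ 2 * (a2 / N))) := by
        rw [hp2]
        have : a2 / N = ∑ S ∈ (Finset.univ : Finset (Fin n)).powerset, cubeFourier f S ^ 2 := by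
          rw [hp]; field_simp
        rw [this]; gcongr
      _ = e ^ 2 * (N * a2) := by field_simp
      _ ≤ e ^ 2 * (q ^ 2 * a1 ^ 2) := by gcongr
      _ = _ := by ring
  unfold pNorm cubeE
  simp only [Real.rpow_one, div_one]
  rw [← mul_div_assoc]
  gcongr
end
end
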